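/- arXiv:2508.03880 — 2 statements merged into one kernel-verified Lean document; each statement's English description precedes it below -/
import Mathlib

section
/- Let k > 1 be a natural number and 1 ≤ p < ∞ with (k−1)p < n. Let Ω ⊂ ℝⁿ be an open set and let φ ∈ W^{k,p}_loc(Ω, ℝⁿ). Then there exists a set S ⊂ Ω with R_{k−1,p}(S) = 0 such that for every non-negative Lebesgue measurable function f : Ω → ℝ one has ∫_Ω f(x) |J(x,φ)| dx = ∫_{ℝⁿ} ( ∑_{x ∈ φ⁻¹{y} ∩ (Ω\S)} f(x) ) dy, where φ is taken to be (the precise representative of) the given Sobolev mapping on Ω \ S and J(x,φ) = det(Dφ(x)) with Dφ(x) the approximate differential. -/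
open MeasureTheory Filter Metric Set
open scoped ENNReal NNReal Topology

noncomputable section

abbrev Euc (n : ℕ) := EuclideanSpace ℝ (Fin n)

/-- Degree of a multi-index. -/
def mdeg {n : ℕ} (α : Fin n → ℕ) : ℕ := ∑ i, α i

/-- Iterated partial derivative along a list of coordinate directions. -/
def listDeriv {n : ℕ} : List (Fin n) → (Euc n → ℝ) → (Euc n → ℝ)
  | [], η => η
  | i :: l, η => fun x => fderiv ℝ (listDeriv l η) x (EuclideanSpace.single i 1)

/-- The partial derivative `D^α η` associated to a multi-index `α`. -/
def mderiv {n : ℕ} (α : Fin n → ℕ) (η : Euc n → ℝ) : Euc n → ℝ :=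
  listDeriv ((List.finRange n).flatMap fun i => List.replicate (α i) i) η

/-- `g` is the weak derivative `D^α f` on `ℝⁿ`. -/
def IsWeakDeriv {n : ℕ} (α : Fin n → ℕ) (f g : Euc n → ℝ) : Prop :=
  ∀ η : Euc n → ℝ, ContDiff ℝ (⊤ : ℕ∞) η → HasCompactSupport η →
    ∫ x, f x * mderiv α η x = (-1 : ℝ) ^ mdeg α * ∫ x, g x * η x

/-- `g` is the weak derivative `D^α f` on an open set `U`. -/
def IsWeakDerivOn {n : ℕ} (U : Set (Euc n)) (α : Fin n → ℕ) (f g : Euc n → ℝ) : Prop :=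
  ∀ η : Euc n → ℝ, ContDiff ℝ (⊤ : ℕ∞) η → HasCompactSupport η → tsupport η ⊆ U →
    ∫ x in U, f x * mderiv α η x = (-1 : ℝ) ^ mdeg α * ∫ x in U, g x * η x

/-- Membership in the Sobolev space `W^{k,p}(U)`. -/
def MemSobolevOn {n : ℕ} (k : ℕ) (p : ℝ) (U : Set (Euc n)) (f : Euc n → ℝ) : Prop :=
  MemLp f (ENNReal.ofReal p) (volume.restrict U) ∧
  ∀ α : Fin n → ℕ, mdeg α ≤ k → ∃ g : Euc n → ℝ,
    MemLp g (ENNReal.ofReal p) (volume.restrict U) ∧ IsWeakDerivOn U α f g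

/-- Membership in the local Sobolev space `W^{k,p}_loc(Ω)`. -/
def MemSobolevLoc {n : ℕ} (k : ℕ) (p : ℝ) (Ω : Set (Euc n)) (f : Euc n → ℝ) : Prop :=
  ∀ U : Set (Euc n), IsOpen U → Bornology.IsBounded U → closure U ⊆ Ω →
    MemSobolevOn k p U f

/-- The normalizing constant `γ(a)` of the Riesz kernel. -/
def rieszGamma (n : ℕ) (a : ℝ) : ℝ :=
  Real.pi ^ ((n : ℝ) / 2) * (2 : ℝ) ^ a * Real.Gamma (a / 2) / Real.Gamma (((n : ℝ) - a) / 2)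

/-- The Riesz potential `I_a * g`, valued in `ℝ≥0∞`. -/
def rieszPot {n : ℕ} (a : ℝ) (g : Euc n → ℝ) (x : Euc n) : ℝ≥0∞ :=
  (ENNReal.ofReal (rieszGamma n a))⁻¹ *
    ∫⁻ y, ENNReal.ofReal (g y) * ENNReal.ofReal (‖x - y‖ ^ (a - (n : ℝ)))

/-- The Riesz capacity `R_{a,p}`. -/
def rieszCap {n : ℕ} (a p : ℝ) (S : Set (Euc n)) : ℝ≥0∞ :=
  ⨅ (g : Euc n → ℝ) (_ : MemLp g (ENNReal.ofReal p) volume ∧ (∀ x, 0 ≤ g x) ∧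
      ∀ x ∈ S, 1 ≤ rieszPot a g x),
    ∫⁻ y, ENNReal.ofReal (g y) ^ p

/-- The precise representative of a (vector-valued) locally integrable function. -/
def preciseRepV {n : ℕ} {F : Type*} [NormedAddCommGroup F] [NormedSpace ℝ F]
    (f : Euc n → F) (x : Euc n) : F :=
  letI := Classical.propDecidable
  if h : ∃ L : F, Tendsto (fun ε : ℝ => ⨍ y in ball x ε, f y) (𝓝[>] (0:ℝ)) (𝓝 L)
  then h.choose else 0

/-- The precise representative of a real-valued locally integrable function. -/
def preciseRep {n : ℕ} (f : Euc n → ℝ) (x : Euc n) : ℝ := preciseRepV f x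

/-- The Hardy–Littlewood maximal function (of an `ℝ≥0∞`-valued integrand). -/
def maxFn {n : ℕ} (g : Euc n → ℝ≥0∞) (x : Euc n) : ℝ≥0∞ :=
  ⨆ (r : ℝ) (_ : 0 < r), (volume (ball x r))⁻¹ * ∫⁻ y in ball x r, g y

/-- `x` is a density point of `S`. -/
def DensityPt {n : ℕ} (S : Set (Euc n)) (x : Euc n) : Prop :=
  Tendsto (fun r : ℝ => volume (S ∩ ball x r) / volume (ball x r)) (𝓝[>] (0:ℝ)) (𝓝 1)

/-- `L` is the approximate differential of `φ` at `x₀`, relative to the domain `A`. -/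
def HasApproxDerivAt {n : ℕ} (A : Set (Euc n)) (φ : Euc n → Euc n)
    (L : Euc n →L[ℝ] Euc n) (x₀ : Euc n) : Prop :=
  DensityPt A x₀ ∧ ∀ ε : ℝ, 0 < ε →
    DensityPt {x | x ∈ A ∧ ‖φ x - φ x₀ - L (x - x₀)‖ ≤ ε * ‖x - x₀‖} x₀

end

/-!
On a small ball, mollify a component `u` of `φ` and cut off. Integrating along rays and averaging
over directions bounds the gradient of the result by `M • I_{k-1} h`, where `h ∈ L^p` dominates all
weak derivatives of `u` of order at most `k`. Riesz potentials of positive functions are `A₁`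
weights, so the pointwise gradient bound integrates to
`|u x - u y| ≤ M |x - y| (I_{k-1} h x + I_{k-1} h y)`, an estimate which survives the limit and,
again by the `A₁` property, passes to the precise representative at every point where the
potential is finite. The precise representative is therefore Lipschitz on each level set
`{I_{k-1} h ≤ N}`, where the classical area formula applies, and what these sets leave uncovered
lies in countably many sets `{I_{k-1} h = ∞}`, which have zero `R_{k-1,p}` capacity because
`h ∈ L^p`.
-/

section FiberSum

variable {X Y : Type*} {v : X → Y} {F G : X → ℝ≥0∞} {s : Set X}

/-- The sum of `F` over the points of `s` lying in the fibre of `v` over `y`. -/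
noncomputable def fiberSum (v : X → Y) (F : X → ℝ≥0∞) (s : Set X) (y : Y) : ℝ≥0∞ :=
  ∑' x : ↥(v ⁻¹' {y} ∩ s), F x

theorem fiberSum_of_notMem_image {y : Y} (hy : y ∉ v '' s) : fiberSum v F s y = 0 := by
  have : IsEmpty ↥(v ⁻¹' {y} ∩ s) := ⟨fun x => hy ⟨x, x.2.2, x.2.1⟩⟩
  exact tsum_empty

theorem fiberSum_of_injOn (hv : InjOn v s) {x : X} (hx : x ∈ s) : fiberSum v F s (v x) = F x := by
  have hfib : v ⁻¹' {v x} ∩ s = {x} := by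
    ext z
    exact ⟨fun hz => hv hz.2 hx hz.1, by rintro rfl; exact ⟨rfl, hx⟩⟩
  rw [fiberSum, hfib]
  exact tsum_singleton x F

theorem fiberSum_congr (h : EqOn F G s) : fiberSum v F s = fiberSum v G s :=
  funext fun _ => tsum_congr fun x => h x.2.2

theorem fiberSum_iUnion {ι : Type*} {s : ι → Set X} (hd : Pairwise (Function.onFun Disjoint s))
    (y : Y) : fiberSum v F (⋃ i, s i) y = ∑' i, fiberSum v F (s i) y := by
  rw [fiberSum, inter_iUnion]
  exact ENNReal.tsum_biUnion (f := F) fun i _ j _ hij =>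
    (hd hij).mono inter_subset_right inter_subset_right

end FiberSum

theorem exists_approximatesLinearOn_injOn {E : Type*} [NormedAddCommGroup E]
    [NormedSpace ℝ E] [FiniteDimensional ℝ E] (A : E →L[ℝ] E) (hA : A.det ≠ 0) :
    ∃ r : ℝ≥0, r ≠ 0 ∧ ∀ (w : E → E) (u : Set E), ApproximatesLinearOn w A u r → InjOn w u := by
  let B := A.toContinuousLinearEquivOfDetNeZero hA
  obtain ⟨r, hr0, hr⟩ : ∃ r : ℝ≥0, r ≠ 0 ∧
      (Subsingleton E ∨ r < ‖(B.symm : E →L[ℝ] E)‖₊⁻¹) := by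
    rcases B.subsingleton_or_nnnorm_symm_pos with h | h
    · exact ⟨1, one_ne_zero, .inl h⟩
    · obtain ⟨r, hr0, hr⟩ := exists_between (inv_pos.2 h)
      exact ⟨r, hr0.ne', .inr hr⟩
  exact ⟨r, hr0, fun w u hw => ApproximatesLinearOn.injOn (f' := B) hw hr⟩

section AreaFormula

variable {E : Type*} [NormedAddCommGroup E] [NormedSpace ℝ E] [MeasurableSpace E] {μ : Measure E}
  {v : E → E} {D : E → E →L[ℝ] E} {F G : E → ℝ≥0∞} {s t : Set E}

/-- The area formula for `v` on `s` with weight `F`, where `D` plays the role of the derivative of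
`v`. Measurability of the fibre sums is part of it, so that the formula can be summed over a
partition. -/
def AreaFormulaOn (μ : Measure E) (v : E → E) (D : E → E →L[ℝ] E) (F : E → ℝ≥0∞)
    (s : Set E) : Prop :=
  AEMeasurable (fiberSum v F s) μ ∧
    ∫⁻ y, fiberSum v F s y ∂μ = ∫⁻ x in s, F x * ENNReal.ofReal |(D x).det| ∂μ

theorem AreaFormulaOn.of_null_image (hv : μ (v '' s) = 0)
    (hD : ∫⁻ x in s, F x * ENNReal.ofReal |(D x).det| ∂μ = 0) : AreaFormulaOn μ v D F s := by
  have h0 : fiberSum v F s =ᵐ[μ] 0 := by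
    filter_upwards [measure_eq_zero_iff_ae_notMem.1 hv] with y hy
    exact fiberSum_of_notMem_image hy
  exact ⟨aemeasurable_const.congr h0.symm, by rw [lintegral_congr_ae h0, hD]; exact lintegral_zero⟩

theorem AreaFormulaOn.congr (hs : MeasurableSet s) (hFG : EqOn F G s)
    (h : AreaFormulaOn μ v D F s) : AreaFormulaOn μ v D G s := by
  rw [AreaFormulaOn, ← fiberSum_congr hFG,
    ← setLIntegral_congr_fun hs fun x hx => congrArg (· * _) (hFG hx)]
  exact h

theorem AreaFormulaOn.iUnion {ι : Type*} [Countable ι] {s : ι → Set E}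
    (hs : ∀ i, MeasurableSet (s i)) (hd : Pairwise (Function.onFun Disjoint s))
    (h : ∀ i, AreaFormulaOn μ v D F (s i)) : AreaFormulaOn μ v D F (⋃ i, s i) := by
  rw [AreaFormulaOn, funext (fiberSum_iUnion hd), lintegral_tsum fun i => (h i).1,
    lintegral_iUnion hs hd]
  exact ⟨AEMeasurable.tsum fun i => (h i).1, tsum_congr fun i => (h i).2⟩

theorem AreaFormulaOn.of_inter_of_sdiff (hs : MeasurableSet s) (ht : MeasurableSet t)
    (hst : AreaFormulaOn μ v D F (s ∩ t)) (hst' : AreaFormulaOn μ v D F (s \ t)) :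
    AreaFormulaOn μ v D F s := by
  rw [← inter_union_sdiff s t, union_eq_iUnion]
  refine iUnion (Bool.forall_bool.2 ⟨hs.diff ht, hs.inter ht⟩) ?_ (Bool.forall_bool.2 ⟨hst', hst⟩)
  exact pairwise_disjoint_on_bool.2 disjoint_inf_sdiff

variable [FiniteDimensional ℝ E] [BorelSpace E] [μ.IsAddHaarMeasure]

theorem AreaFormulaOn.of_injOn (hF : Measurable F) (hs : MeasurableSet s)
    (hD : ∀ x ∈ s, HasFDerivWithinAt v (D x) s x) (hv : InjOn v s) : AreaFormulaOn μ v D F s := by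
  have himage : MeasurableSet (v '' s) := measurable_image_of_fderivWithin hs hD hv
  obtain ⟨g, hg, hgF⟩ := (measurableEmbedding_of_fderivWithin hs hD hv).exists_measurable_extend
    (hF.comp measurable_subtype_coe) (fun _ => ⟨0⟩)
  replace hgF : ∀ x ∈ s, g (v x) = F x := fun x hx => congrFun hgF ⟨x, hx⟩
  have hfib : fiberSum v F s = (v '' s).indicator g := by
    funext y
    by_cases hy : y ∈ v '' s
    · obtain ⟨x, hx, rfl⟩ := hy
      rw [indicator_of_mem (mem_image_of_mem v hx), hgF x hx, fiberSum_of_injOn hv hx]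
    · rw [indicator_of_notMem hy, fiberSum_of_notMem_image hy]
  refine ⟨hfib ▸ (hg.indicator himage).aemeasurable, ?_⟩
  rw [hfib, lintegral_indicator himage, lintegral_image_eq_lintegral_abs_det_fderiv_mul μ hs hD hv]
  exact setLIntegral_congr_fun hs fun x hx => by simp only [hgF x hx, mul_comm]

theorem AreaFormulaOn.of_det_ne_zero (hF : Measurable F) (hs : MeasurableSet s)
    (hD : ∀ x ∈ s, HasFDerivWithinAt v (D x) s x) (hdet : ∀ x ∈ s, (D x).det ≠ 0) :
    AreaFormulaOn μ v D F s := by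
  rcases s.eq_empty_or_nonempty with rfl | hne
  · exact of_null_image (by simp) (by simp)
  have hr (A : E →L[ℝ] E) : ∃ r : ℝ≥0, r ≠ 0 ∧
      (A.det ≠ 0 → ∀ (w : E → E) (u : Set E), ApproximatesLinearOn w A u r → InjOn w u) := by
    by_cases hA : A.det = 0
    · exact ⟨1, one_ne_zero, fun h => absurd hA h⟩
    · obtain ⟨r, hr0, hr⟩ := exists_approximatesLinearOn_injOn A hA
      exact ⟨r, hr0, fun _ => hr⟩
  choose r hr0 hr using hr
  obtain ⟨u, L, hdisj, humeas, hcover, happrox, hL⟩ :=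
    exists_partition_approximatesLinearOn_of_hasFDerivWithinAt v s D hD r hr0
  rw [← inter_eq_left.2 hcover, inter_iUnion]
  refine iUnion (fun i => hs.inter (humeas i))
    (fun i j hij => (hdisj hij).mono inter_subset_right inter_subset_right) fun i => ?_
  obtain ⟨y, hy, hLy⟩ := hL hne i
  exact of_injOn hF (hs.inter (humeas i)) (fun x hx => (hD x hx.1).mono inter_subset_left)
    (hr (L i) (hLy ▸ hdet y hy) v _ (happrox i))

theorem AreaFormulaOn.of_hasFDerivWithinAt (hF : AEMeasurable F (μ.restrict s))
    (hs : MeasurableSet s) (hD : ∀ x ∈ s, HasFDerivWithinAt v (D x) s x) :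
    AreaFormulaOn μ v D F s := by
  have hD' := aemeasurable_fderivWithin μ hs hD
  let B := toMeasurable (μ.restrict s) {x | ¬ (F x = hF.mk F x ∧ D x = hD'.mk D x)}
  have hB : MeasurableSet B := measurableSet_toMeasurable _ _
  have hB0 : μ (s ∩ B) = 0 := by
    rw [inter_comm, ← Measure.restrict_apply hB, measure_toMeasurable]
    exact hF.ae_eq_mk.and hD'.ae_eq_mk
  have hgood : ∀ x ∈ s \ B, F x = hF.mk F x ∧ D x = hD'.mk D x := fun x hx =>
    not_not.1 fun h => hx.2 (subset_toMeasurable _ _ h)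
  refine of_inter_of_sdiff hs hB (of_null_image ?_ (setLIntegral_measure_zero _ _ hB0)) ?_
  · exact addHaar_image_eq_zero_of_differentiableOn_of_addHaar_eq_zero μ
      (fun x hx => ((hD x hx.1).mono inter_subset_left).differentiableWithinAt) hB0
  have hDB : ∀ u ⊆ s, ∀ x ∈ u, HasFDerivWithinAt v (D x) u x := fun u hu x hx =>
    (hD x (hu hx)).mono hu
  let Z := {x | (hD'.mk D x).det = 0}
  have hZ : MeasurableSet Z := (ContinuousLinearMap.continuous_det.measurable.comp
    hD'.measurable_mk) (measurableSet_singleton 0)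
  have hdetZ : ∀ x ∈ (s \ B) ∩ Z, (D x).det = 0 := fun x hx => by
    rw [(hgood x hx.1).2]; exact hx.2
  refine of_inter_of_sdiff (hs.diff hB) hZ (of_null_image ?_ ?_) ?_
  · exact addHaar_image_eq_zero_of_det_fderivWithin_eq_zero μ
      (hDB _ (inter_subset_left.trans sdiff_subset)) hdetZ
  · rw [setLIntegral_congr_fun ((hs.diff hB).inter hZ) fun x hx => by
      rw [hdetZ x hx, abs_zero, ENNReal.ofReal_zero, mul_zero]]
    exact lintegral_zero
  · refine congr ((hs.diff hB).diff hZ) (fun x hx => (hgood x hx.1).1.symm) ?_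
    refine of_det_ne_zero hF.measurable_mk ((hs.diff hB).diff hZ)
      (hDB _ (sdiff_subset.trans sdiff_subset)) fun x hx => ?_
    rw [(hgood x hx.1).2]
    exact hx.2

theorem addHaar_image_eq_zero_of_lipschitzOnWith {C : ℝ≥0} (hv : LipschitzOnWith C v s)
    (hs : μ s = 0) : μ (v '' s) = 0 := by
  have hμ : μ ≪ μH[Module.finrank ℝ E] := Measure.absolutelyContinuous_isAddHaarMeasure _ _
  have hμ' : μH[Module.finrank ℝ E] ≪ μ := Measure.absolutelyContinuous_isAddHaarMeasure _ _
  refine hμ (le_antisymm ((hv.hausdorffMeasure_image_le (Nat.cast_nonneg _)).trans ?_) zero_le)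
  rw [hμ' hs, mul_zero]

theorem AreaFormulaOn.of_lipschitzOnWith {C : ℝ≥0} (hF : AEMeasurable F (μ.restrict s))
    (hs : MeasurableSet s) (hv : LipschitzOnWith C v s)
    (hD : ∀ x ∈ s, DifferentiableWithinAt ℝ v s x → HasFDerivWithinAt v (D x) s x) :
    AreaFormulaOn μ v D F s := by
  let B := toMeasurable (μ.restrict s) {x | ¬ DifferentiableWithinAt ℝ v s x}
  have hB : MeasurableSet B := measurableSet_toMeasurable _ _
  have hB0 : μ (s ∩ B) = 0 := by
    rw [inter_comm, ← Measure.restrict_apply hB, measure_toMeasurable]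
    exact hv.ae_differentiableWithinAt hs
  refine of_inter_of_sdiff hs hB (of_null_image ?_ (setLIntegral_measure_zero _ _ hB0)) ?_
  · exact addHaar_image_eq_zero_of_lipschitzOnWith (hv.mono inter_subset_left) hB0
  · refine of_hasFDerivWithinAt (hF.mono_set sdiff_subset) (hs.diff hB) fun x hx => ?_
    exact (hD x hx.1 (not_not.1 fun h => hx.2 (subset_toMeasurable _ _ h))).mono sdiff_subset

end AreaFormula

theorem exists_disjoint_seq_of_countable {X ι : Type*} [MeasurableSpace X] [Countable ι]
    {P : Set X → Prop} (h0 : P ∅) (hmono : ∀ A B, A ⊆ B → P B → P A) {s : ι → Set X}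
    (hs : ∀ i, MeasurableSet (s i)) (hP : ∀ i, P (s i)) :
    ∃ u : ℕ → Set X, (∀ i, MeasurableSet (u i)) ∧ Pairwise (Function.onFun Disjoint u) ∧
      ⋃ i, u i = ⋃ i, s i ∧ ∀ i, P (u i) := by
  have := Encodable.ofCountable ι
  let t (i : ℕ) : Set X := ⋃ j ∈ Encodable.decode₂ ι i, s j
  have ht (i : ℕ) : MeasurableSet (t i) :=
    Encodable.iUnion_decode₂_cases (C := MeasurableSet) MeasurableSet.empty hs
  exact ⟨disjointed t, MeasurableSet.disjointed ht, disjoint_disjointed t,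
    iUnion_disjointed.trans (Encodable.iUnion_decode₂ s), fun i =>
      hmono _ _ (disjointed_subset t i) (Encodable.iUnion_decode₂_cases (C := P) h0 hP)⟩

section Gluing

variable {E : Type*} [NormedAddCommGroup E] [NormedSpace ℝ E] [FiniteDimensional ℝ E]
  [MeasurableSpace E] [BorelSpace E] {μ : Measure E} [μ.IsAddHaarMeasure] {v : E → E}

theorem exists_areaFormulaOn_iUnion_of_disjoint {u : ℕ → Set E} (hu : ∀ i, MeasurableSet (u i))
    (hd : Pairwise (Function.onFun Disjoint u)) (hv : ∀ i, ∃ C, LipschitzOnWith C v (u i)) :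
    ∃ D : E → E →L[ℝ] E,
      (∀ i, ∀ᵐ x ∂μ, x ∈ u i → HasFDerivWithinAt v (D x) (u i) x) ∧
      ∀ F, AEMeasurable F (μ.restrict (⋃ i, u i)) → AreaFormulaOn μ v D F (⋃ i, u i) := by
  have hD (x : E) : ∃ L : E →L[ℝ] E, ∀ i, x ∈ u i → DifferentiableWithinAt ℝ v (u i) x →
      HasFDerivWithinAt v L (u i) x := by
    by_cases hx : ∃ i, x ∈ u i
    · obtain ⟨i, hi⟩ := hx
      refine ⟨fderivWithin ℝ v (u i) x, fun j hj hdiff => ?_⟩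
      obtain rfl : i = j := by_contra fun hne => disjoint_left.1 (hd hne) hi hj
      exact hdiff.hasFDerivWithinAt
    · exact ⟨0, fun i hi => absurd ⟨i, hi⟩ hx⟩
  choose D hD using hD
  choose C hC using hv
  refine ⟨D, fun i => ?_, fun F hF => AreaFormulaOn.iUnion hu hd fun i => ?_⟩
  · filter_upwards [(hC i).ae_differentiableWithinAt_of_mem] with x hdiff hx
    exact hD x i hx (hdiff hx)
  · exact .of_lipschitzOnWith (hF.mono_set (subset_iUnion u i)) (hu i) (hC i) fun x => hD x i

end Gluing

section Density

variable {n : ℕ} {A B : Set (Euc n)} {x : Euc n}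

theorem ae_densityPt (hA : MeasurableSet A) : ∀ᵐ x, x ∈ A → DensityPt A x := by
  filter_upwards [Besicovitch.ae_tendsto_measure_inter_div_of_measurableSet volume hA]
    with x hx hxA
  rw [indicator_of_mem hxA] at hx
  refine hx.congr' ?_
  filter_upwards [self_mem_nhdsWithin] with r hr
  have hball : ball x r =ᵐ[volume] closedBall x r := by
    rw [← ball_union_sphere]
    exact (union_ae_eq_left_of_ae_eq_empty
      (ae_eq_empty.2 (Measure.addHaar_sphere_of_ne_zero volume x (ne_of_gt hr)))).symm
  rw [measure_congr hball, measure_congr ((ae_eq_refl A).inter hball)]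

theorem DensityPt.mono_of_mem_nhds {U : Set (Euc n)} (hA : DensityPt A x) (hU : U ∈ 𝓝 x)
    (h : A ∩ U ⊆ B) : DensityPt B x := by
  obtain ⟨δ, hδ, hδU⟩ := Metric.mem_nhds_iff.1 hU
  refine tendsto_of_tendsto_of_tendsto_of_le_of_le' hA tendsto_const_nhds ?_ ?_
  · filter_upwards [Ioo_mem_nhdsGT hδ] with r hr
    refine ENNReal.div_le_div_right (measure_mono fun y hy => ?_) _
    exact ⟨h ⟨hy.1, hδU (ball_subset_ball hr.2.le hy.2)⟩, hy.2⟩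
  · filter_upwards with r
    exact ENNReal.div_le_of_le_mul (by rw [one_mul]; exact measure_mono inter_subset_right)

theorem HasApproxDerivAt.of_hasFDerivWithinAt {v : Euc n → Euc n} {L : Euc n →L[ℝ] Euc n}
    (hL : HasFDerivWithinAt v L A x) (hA : DensityPt A x) (hAB : A ⊆ B) :
    HasApproxDerivAt B v L x := by
  refine ⟨hA.mono_of_mem_nhds univ_mem (inter_subset_left.trans hAB), fun ε hε => ?_⟩
  have hbound := eventually_nhdsWithin_iff.1 (hL.isLittleO.bound hε)
  exact hA.mono_of_mem_nhds hbound fun y hy => ⟨hAB hy.1, hy.2 hy.1⟩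

theorem exists_hasApproxDerivAt_and_areaFormulaOn {ι : Type*} [Countable ι] {v : Euc n → Euc n}
    {s : ι → Set (Euc n)} (hs : ∀ i, MeasurableSet (s i))
    (hv : ∀ i, ∃ C, LipschitzOnWith C v (s i)) :
    ∃ D : Euc n → Euc n →L[ℝ] Euc n,
      (∀ᵐ x ∂volume.restrict (⋃ i, s i), HasApproxDerivAt (⋃ i, s i) v (D x) x) ∧
      ∀ F, AEMeasurable F (volume.restrict (⋃ i, s i)) →
        AreaFormulaOn volume v D F (⋃ i, s i) := by
  obtain ⟨u, hu, hd, hus, hvu⟩ := exists_disjoint_seq_of_countable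
    (P := fun A => ∃ C, LipschitzOnWith C v A) ⟨0, lipschitzOnWith_empty 0 v⟩
    (fun A B hAB ⟨C, hC⟩ => ⟨C, hC.mono hAB⟩) hs hv
  obtain ⟨D, hD, harea⟩ := exists_areaFormulaOn_iUnion_of_disjoint (μ := volume) hu hd hvu
  rw [← hus]
  refine ⟨D, ?_, harea⟩
  rw [ae_restrict_iff' (MeasurableSet.iUnion hu)]
  filter_upwards [ae_all_iff.2 fun i => ae_densityPt (hu i), ae_all_iff.2 hD] with x hdens hDx hx
  obtain ⟨i, hi⟩ := mem_iUnion.1 hx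
  exact .of_hasFDerivWithinAt (hDx i hi) (hdens i hi) (subset_iUnion u i)

end Density

section PolarCoordinates

variable {E : Type*} [NormedAddCommGroup E] [NormedSpace ℝ E] [FiniteDimensional ℝ E]
  [Nontrivial E] [MeasurableSpace E] [BorelSpace E] (μ : Measure E) [μ.IsAddHaarMeasure]

theorem lintegral_eq_lintegral_toSphere_lintegral_Ioi {f : E → ℝ≥0∞} (hf : Measurable f) :
    ∫⁻ x, f x ∂μ = ∫⁻ z : sphere (0 : E) 1, (∫⁻ t in Ioi (0 : ℝ),
      ENNReal.ofReal (t ^ (Module.finrank ℝ E - 1)) * f (t • (z : E))) ∂μ.toSphere := by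
  let g (q : sphere (0 : E) 1 × Ioi (0 : ℝ)) : ℝ≥0∞ := f ((q.2 : ℝ) • (q.1 : E))
  have hg : Measurable g := by fun_prop
  have hgf (x : ({0}ᶜ : Set E)) : g (homeomorphUnitSphereProd E x) = f x := by
    simp only [g]
    rw [← homeomorphUnitSphereProd_symm_apply_coe, Homeomorph.symm_apply_apply]
  calc ∫⁻ x, f x ∂μ = ∫⁻ x : ({0}ᶜ : Set E), f x ∂μ.comap (↑) := by
        rw [lintegral_subtype_comap (measurableSet_singleton _).compl f,
          restrict_compl_singleton]
    _ = ∫⁻ q, g q ∂μ.toSphere.prod (.volumeIoiPow (Module.finrank ℝ E - 1)) := by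
        rw [← μ.measurePreserving_homeomorphUnitSphereProd.lintegral_comp hg]
        exact lintegral_congr fun x => (hgf x).symm
    _ = _ := by
        rw [lintegral_prod _ hg.aemeasurable]
        refine lintegral_congr fun z => ?_
        rw [Measure.volumeIoiPow, lintegral_withDensity_eq_lintegral_mul _ (by fun_prop)
          (by fun_prop)]
        exact lintegral_subtype_comap measurableSet_Ioi fun t =>
          ENNReal.ofReal (t ^ (Module.finrank ℝ E - 1)) * f (t • (z : E))

theorem lintegral_ball_zero_enorm_rpow {b R : ℝ} (hb : -(Module.finrank ℝ E : ℝ) < b)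
    (hR : 0 ≤ R) :
    ∫⁻ y in ball (0 : E) R, ‖y‖ₑ ^ b ∂μ = μ.toSphere univ *
      ENNReal.ofReal (R ^ (Module.finrank ℝ E + b) / (Module.finrank ℝ E + b)) := by
  have hn : ((Module.finrank ℝ E - 1 : ℕ) : ℝ) + b = Module.finrank ℝ E + b - 1 := by
    rw [Nat.cast_sub Module.finrank_pos]; push_cast; ring
  have hradial (z : sphere (0 : E) 1) : ∫⁻ t in Ioi (0 : ℝ),
      ENNReal.ofReal (t ^ (Module.finrank ℝ E - 1)) *
        (ball 0 R).indicator (fun y : E => ‖y‖ₑ ^ b) (t • (z : E)) =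
      ∫⁻ t in Ioo 0 R, ENNReal.ofReal (t ^ (Module.finrank ℝ E + b - 1)) := by
    rw [← Ioi_inter_Iio, inter_comm, ← Measure.restrict_restrict measurableSet_Iio,
      ← lintegral_indicator measurableSet_Iio]
    refine setLIntegral_congr_fun measurableSet_Ioi fun t ht => ?_
    have ht : 0 < t := ht
    by_cases htR : t < R
    · have hmem : t • (z : E) ∈ ball 0 R := by simpa [norm_smul, abs_of_pos ht]
      rw [indicator_of_mem hmem, indicator_of_mem (mem_Iio.2 htR), ← ofReal_norm, norm_smul,
        norm_eq_of_mem_sphere, mul_one, Real.norm_of_nonneg ht.le, ENNReal.ofReal_rpow_of_pos ht,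
        ← ENNReal.ofReal_mul (by positivity), ← Real.rpow_natCast, ← Real.rpow_add ht, hn]
    · have hmem : t • (z : E) ∉ ball 0 R := by simpa [norm_smul, abs_of_pos ht] using htR
      rw [indicator_of_notMem hmem, indicator_of_notMem (notMem_Iio.2 (not_lt.1 htR)), mul_zero]
  rw [← lintegral_indicator measurableSet_ball, lintegral_eq_lintegral_toSphere_lintegral_Ioi μ
      ((by fun_prop : Measurable fun y : E => ‖y‖ₑ ^ b).indicator measurableSet_ball),
    lintegral_congr hradial, lintegral_const, mul_comm, restrict_Ioo_eq_restrict_Ioc,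
    ← ofReal_integral_eq_lintegral_ofReal]
  · rw [← intervalIntegral.integral_of_le hR, integral_rpow (.inl (by linarith)), sub_add_cancel,
      Real.zero_rpow (by linarith), sub_zero]
  · exact (intervalIntegrable_iff_integrableOn_Ioc_of_le hR).1
      (intervalIntegral.intervalIntegrable_rpow' (by linarith))
  · filter_upwards [ae_restrict_mem measurableSet_Ioc] with t ht
    exact Real.rpow_nonneg ht.1.le _

end PolarCoordinates

theorem ennreal_rpow_le_rpow_of_nonpos {a c : ℝ≥0∞} {b : ℝ} (hac : a ≤ c) (hb : b ≤ 0) :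
    c ^ b ≤ a ^ b := by
  rw [← neg_neg b, ENNReal.rpow_neg, ENNReal.rpow_neg a, ENNReal.inv_le_inv]
  exact ENNReal.rpow_le_rpow hac (neg_nonneg.2 hb)

section A1Weight

/-- Muckenhoupt `A₁` weights with constant `C`: the average of `G` over a ball is at most `C` times
the value of `G` at the centre of the ball. The inequality is required at every centre, not only at
almost every one, since it is applied at points outside a set of zero capacity. -/
structure IsA1Weight {X : Type*} [PseudoMetricSpace X] [MeasurableSpace X] (μ : Measure X)
    (C : ℝ≥0∞) (G : X → ℝ≥0∞) : Prop where
  measurable : Measurable G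
  setLIntegral_ball_le : ∀ x r, ∫⁻ y in ball x r, G y ∂μ ≤ C * μ (ball x r) * G x

theorem IsA1Weight.const_mul {X : Type*} [PseudoMetricSpace X] [MeasurableSpace X] {μ : Measure X}
    {C : ℝ≥0∞} {G : X → ℝ≥0∞} (hG : IsA1Weight μ C G) (c : ℝ≥0∞) :
    IsA1Weight μ C fun x => c * G x where
  measurable := hG.measurable.const_mul c
  setLIntegral_ball_le x r := by
    rw [lintegral_const_mul c hG.measurable, mul_left_comm]
    gcongr
    exact hG.setLIntegral_ball_le x r

variable {E : Type*} [NormedAddCommGroup E] [MeasurableSpace E] [BorelSpace E] {μ : Measure E}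

theorem setLIntegral_ball_comp_neg_add [μ.IsAddLeftInvariant] (G : E → ℝ≥0∞) (x y : E) (r : ℝ) :
    ∫⁻ z in ball x r, G (-y + z) ∂μ = ∫⁻ z in ball (-y + x) r, G z ∂μ := by
  have := (measurePreserving_add_left μ (-y)).setLIntegral_comp_preimage_emb
    (measurableEmbedding_addLeft (-y)) G (ball (-y + x) r)
  rwa [preimage_add_ball, sub_neg_eq_add, neg_add_cancel_comm] at this

theorem IsA1Weight.lconvolution [SecondCountableTopology E] [SFinite μ] [μ.IsAddHaarMeasure]
    {C : ℝ≥0∞} {h G : E → ℝ≥0∞} (hG : IsA1Weight μ C G) (hh : Measurable h) :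
    IsA1Weight μ C (h ⋆ₗ[μ] G) where
  measurable := measurable_lconvolution μ hh hG.measurable
  setLIntegral_ball_le x r := by
    have hGm := hG.measurable
    calc ∫⁻ z in ball x r, (h ⋆ₗ[μ] G) z ∂μ
        = ∫⁻ y, h y * ∫⁻ z in ball (-y + x) r, G z ∂μ ∂μ := by
          simp only [lconvolution_def]
          rw [lintegral_lintegral_swap (by fun_prop)]
          refine lintegral_congr fun y => ?_
          rw [lintegral_const_mul _ (by fun_prop), setLIntegral_ball_comp_neg_add]
      _ ≤ ∫⁻ y, C * μ (ball x r) * (h y * G (-y + x)) ∂μ := by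
          refine lintegral_mono fun y => ?_
          rw [mul_left_comm, Measure.addHaar_ball_center μ x,
            ← Measure.addHaar_ball_center μ (-y + x)]
          gcongr
          exact hG.setLIntegral_ball_le _ r
      _ = C * μ (ball x r) * (h ⋆ₗ[μ] G) x := by
          rw [lintegral_const_mul _ (by fun_prop), lconvolution_def]

theorem setLIntegral_ball_enorm_rpow_le_of_two_mul_le_norm {b : ℝ} (hb : b ≤ 0) {x : E} {r : ℝ}
    (hx : 2 * r ≤ ‖x‖) :
    ∫⁻ y in ball x r, ‖y‖ₑ ^ b ∂μ ≤ 2 ^ (-b) * μ (ball x r) * ‖x‖ₑ ^ b := by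
  rcases le_or_gt r 0 with hr | -
  · simp [ball_eq_empty.2 hr]
  have hle (y : E) (hy : y ∈ ball x r) : ‖y‖ₑ ^ b ≤ 2 ^ (-b) * ‖x‖ₑ ^ b := by
    have hxy : 2⁻¹ * ‖x‖ₑ ≤ ‖y‖ₑ := by
      rw [← ENNReal.div_eq_inv_mul, ← ofReal_norm, ← ofReal_norm, ← ENNReal.ofReal_ofNat,
        ← ENNReal.ofReal_div_of_pos two_pos]
      refine ENNReal.ofReal_le_ofReal ?_
      have := norm_sub_norm_le x y
      rw [mem_ball, dist_comm, dist_eq_norm] at hy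
      linarith
    refine (ennreal_rpow_le_rpow_of_nonpos hxy hb).trans_eq ?_
    rw [ENNReal.mul_rpow_of_ne_top (by simp) enorm_ne_top, ENNReal.inv_rpow, ENNReal.rpow_neg]
  calc ∫⁻ y in ball x r, ‖y‖ₑ ^ b ∂μ ≤ ∫⁻ _ in ball x r, 2 ^ (-b) * ‖x‖ₑ ^ b ∂μ :=
        setLIntegral_mono' measurableSet_ball hle
    _ = 2 ^ (-b) * μ (ball x r) * ‖x‖ₑ ^ b := by rw [setLIntegral_const, mul_right_comm]

variable [NormedSpace ℝ E] [FiniteDimensional ℝ E] [Nontrivial E] [μ.IsAddHaarMeasure] {b : ℝ}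

theorem exists_setLIntegral_ball_enorm_rpow_le_of_norm_lt_two_mul
    (hb : -(Module.finrank ℝ E : ℝ) < b) (hb0 : b < 0) :
    ∃ C : ℝ≥0∞, C ≠ ∞ ∧ ∀ (x : E) (r : ℝ), ‖x‖ < 2 * r →
      ∫⁻ y in ball x r, ‖y‖ₑ ^ b ∂μ ≤ C * μ (ball x r) * ‖x‖ₑ ^ b := by
  set n := Module.finrank ℝ E with hn
  have hpos := measure_ball_pos μ (0 : E) one_pos
  refine ⟨μ.toSphere univ * ENNReal.ofReal (3 ^ n / (n + b)) / μ (ball 0 1),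
    ENNReal.div_ne_top (ENNReal.mul_ne_top (measure_ne_top _ _) ENNReal.ofReal_ne_top) hpos.ne',
    fun x r hx => ?_⟩
  have hr : 0 < r := by linarith [norm_nonneg x]
  have hsub : ball x r ⊆ ball 0 (3 * r) := ball_subset_ball' (by rw [dist_zero_right]; linarith)
  have hkernel : ENNReal.ofReal ((3 * r) ^ b) ≤ ‖x‖ₑ ^ b := by
    rw [← ENNReal.ofReal_rpow_of_pos (by positivity)]
    refine ennreal_rpow_le_rpow_of_nonpos ?_ hb0.le
    rw [← ofReal_norm]
    exact ENNReal.ofReal_le_ofReal (by linarith)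
  calc ∫⁻ y in ball x r, ‖y‖ₑ ^ b ∂μ
      ≤ ∫⁻ y in ball 0 (3 * r), ‖y‖ₑ ^ b ∂μ := lintegral_mono_set hsub
    _ = μ.toSphere univ * ENNReal.ofReal (3 ^ n / (n + b)) * ENNReal.ofReal (r ^ n) *
          ENNReal.ofReal ((3 * r) ^ b) := by
        rw [lintegral_ball_zero_enorm_rpow μ hb (by positivity), mul_assoc, mul_assoc,
          ← ENNReal.ofReal_mul (by positivity), ← ENNReal.ofReal_mul (by
            have : 0 < (n : ℝ) + b := by linarith
            positivity), ← hn, Real.rpow_add (by positivity), Real.rpow_natCast, mul_pow]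
        ring_nf
    _ ≤ μ.toSphere univ * ENNReal.ofReal (3 ^ n / (n + b)) * ENNReal.ofReal (r ^ n) * ‖x‖ₑ ^ b := by
        gcongr
    _ = μ.toSphere univ * ENNReal.ofReal (3 ^ n / (n + b)) / μ (ball 0 1) * μ (ball x r) *
          ‖x‖ₑ ^ b := by
        rw [Measure.addHaar_ball_of_pos μ x hr, mul_comm (ENNReal.ofReal (r ^ _)), ← mul_assoc,
          ENNReal.div_mul_cancel hpos.ne' measure_ball_ne_top]

theorem exists_isA1Weight_enorm_rpow (hb : -(Module.finrank ℝ E : ℝ) < b) (hb0 : b < 0) :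
    ∃ C : ℝ≥0∞, C ≠ ∞ ∧ IsA1Weight μ C fun z : E => ‖z‖ₑ ^ b := by
  obtain ⟨C, hC, hnear⟩ := exists_setLIntegral_ball_enorm_rpow_le_of_norm_lt_two_mul (μ := μ) hb hb0
  refine ⟨max (2 ^ (-b)) C, (max_lt (ENNReal.rpow_lt_top_of_nonneg (by linarith) (by simp))
    hC.lt_top).ne, by fun_prop, fun x r => ?_⟩
  rcases le_or_gt (2 * r) ‖x‖ with hx | hx
  · refine (setLIntegral_ball_enorm_rpow_le_of_two_mul_le_norm hb0.le hx).trans ?_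
    gcongr
    exact le_max_left _ _
  · refine (hnear x r hx).trans ?_
    gcongr
    exact le_max_right _ _

end A1Weight

section RieszPotential

variable {E : Type*} [NormedAddCommGroup E] [NormedSpace ℝ E] [MeasurableSpace E]

/-- The Riesz potential of order `a` without its normalising constant. The kernel takes the value
`∞` at the origin, so that potentials behave well under limits and satisfy the `A₁` inequality at
every point. -/
noncomputable def rieszPotential (μ : Measure E) (a : ℝ) (h : E → ℝ≥0∞) : E → ℝ≥0∞ :=
  h ⋆ₗ[μ] fun z => ‖z‖ₑ ^ (a - Module.finrank ℝ E)

variable {μ : Measure E} {a : ℝ} {g h : E → ℝ≥0∞}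

theorem rieszPotential_mono (hgh : ∀ y, g y ≤ h y) (x : E) :
    rieszPotential μ a g x ≤ rieszPotential μ a h x := by
  simp only [rieszPotential, lconvolution_def]
  gcongr
  exact hgh _

variable [BorelSpace E]

theorem rieszPotential_const_mul (hh : Measurable h) (c : ℝ≥0∞) (x : E) :
    rieszPotential μ a (fun y => c * h y) x = c * rieszPotential μ a h x := by
  simp only [rieszPotential, lconvolution_def, mul_assoc]
  exact lintegral_const_mul c (by fun_prop)

variable [FiniteDimensional ℝ E] [μ.IsAddHaarMeasure]

theorem measurable_rieszPotential (hh : Measurable h) : Measurable (rieszPotential μ a h) :=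
  measurable_lconvolution μ hh (by fun_prop)

variable [Nontrivial E]

theorem ae_rieszPotential_lt_top (ha0 : 0 < a) (han : a ≤ Module.finrank ℝ E) (hh : Measurable h)
    (hint : ∫⁻ y, h y ∂μ ≠ ∞) : ∀ᵐ x ∂μ, rieszPotential μ a h x < ∞ := by
  let K (z : E) : ℝ≥0∞ := ‖z‖ₑ ^ (a - Module.finrank ℝ E)
  let K₁ : E → ℝ≥0∞ := (ball 0 1).indicator K
  have hK₁ : Measurable K₁ := (by fun_prop : Measurable K).indicator measurableSet_ball
  have hK (z : E) : K z ≤ K₁ z + 1 := by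
    by_cases hz : z ∈ ball (0 : E) 1
    · exact (indicator_of_mem hz K).ge.trans le_self_add
    · refine le_add_of_le_right ?_
      calc K z ≤ 1 ^ (a - Module.finrank ℝ E) := by
            refine ennreal_rpow_le_rpow_of_nonpos ?_ (by linarith)
            rw [← ofReal_norm, ENNReal.one_le_ofReal]
            simpa using hz
        _ = 1 := ENNReal.one_rpow _
  have hpot (x : E) : rieszPotential μ a h x ≤ (h ⋆ₗ[μ] K₁) x + ∫⁻ y, h y ∂μ := by
    rw [lconvolution_def, ← lintegral_add_right _ hh]
    refine lintegral_mono fun y => ?_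
    exact (mul_le_mul' le_rfl (hK _)).trans_eq (by rw [mul_add, mul_one])
  have hnear : ∫⁻ x, (h ⋆ₗ[μ] K₁) x ∂μ ≠ ∞ := by
    have hswap : ∫⁻ x, (h ⋆ₗ[μ] K₁) x ∂μ = (∫⁻ y, h y ∂μ) * ∫⁻ z, K₁ z ∂μ := by
      simp only [lconvolution_def]
      rw [lintegral_lintegral_swap (by fun_prop), ← lintegral_mul_const _ hh]
      refine lintegral_congr fun y => ?_
      rw [lintegral_const_mul _ (by fun_prop), lintegral_add_left_eq_self]
    rw [hswap, lintegral_indicator measurableSet_ball,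
      lintegral_ball_zero_enorm_rpow μ (by linarith) zero_le_one]
    exact ENNReal.mul_ne_top hint (ENNReal.mul_ne_top (measure_ne_top _ _) ENNReal.ofReal_ne_top)
  filter_upwards [ae_lt_top (measurable_lconvolution μ hh hK₁) hnear] with x hx
  exact (hpot x).trans_lt (ENNReal.add_lt_top.2 ⟨hx, hint.lt_top⟩)

theorem exists_isA1Weight_rieszPotential (ha0 : 0 < a) (han : a < Module.finrank ℝ E) :
    ∃ C : ℝ≥0∞, C ≠ ∞ ∧ ∀ h : E → ℝ≥0∞, Measurable h → IsA1Weight μ C (rieszPotential μ a h) := by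
  obtain ⟨C, hC, hA1⟩ := exists_isA1Weight_enorm_rpow (μ := μ) (E := E)
    (b := a - Module.finrank ℝ E) (by linarith) (by linarith)
  exact ⟨C, hC, fun h hh => hA1.lconvolution hh⟩

end RieszPotential

section RieszCapacity

theorem exists_measurable_lintegral_rpow_ne_top_of_countable {X ι : Type*} [Countable ι]
    [MeasurableSpace X] {μ : Measure X} {p : ℝ} (hp : 0 < p) {h : ι → X → ℝ≥0∞}
    (hh : ∀ j, Measurable (h j)) (hint : ∀ j, ∫⁻ x, h j x ^ p ∂μ ≠ ∞) :
    ∃ H : X → ℝ≥0∞, Measurable H ∧ ∫⁻ x, H x ^ p ∂μ ≠ ∞ ∧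
      ∀ j, ∃ c : ℝ≥0∞, c ≠ 0 ∧ ∀ x, c * h j x ≤ H x := by
  obtain ⟨c, hc0, hc⟩ := ENNReal.exists_pos_tsum_mul_lt_of_countable one_ne_zero _ hint
  let Q (x : X) : ℝ≥0∞ := ∑' j, h j x ^ p * c j
  have hQ : ∫⁻ x, Q x ∂μ ≠ ∞ := by
    rw [lintegral_tsum fun j => (((hh j).pow_const p).mul_const _).aemeasurable]
    simp only [fun j => lintegral_mul_const (μ := μ) (c j : ℝ≥0∞) ((hh j).pow_const p)]
    exact hc.ne_top
  refine ⟨fun x => Q x ^ p⁻¹,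
    (Measurable.tsum fun j => ((hh j).pow_const p).mul_const _).pow_const _, ?_,
    fun j => ⟨(c j : ℝ≥0∞) ^ p⁻¹, ?_, fun x => ?_⟩⟩
  · simpa only [ENNReal.rpow_inv_rpow hp.ne'] using hQ
  · simp [ENNReal.rpow_eq_zero_iff, (hc0 j).ne']
  · calc (c j : ℝ≥0∞) ^ p⁻¹ * h j x = (h j x ^ p * c j) ^ p⁻¹ := by
          rw [ENNReal.mul_rpow_of_nonneg _ _ (inv_nonneg.2 hp.le), ENNReal.rpow_rpow_inv hp.ne',
            mul_comm]
      _ ≤ Q x ^ p⁻¹ := by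
          gcongr
          exact ENNReal.le_tsum (f := fun j => h j x ^ p * (c j : ℝ≥0∞)) j

variable {n : ℕ} {a p : ℝ} {S : Set (Euc n)} {H : Euc n → ℝ≥0∞} {x : Euc n}

theorem rieszPot_toReal_eq_top (hn : 0 < n) (hH : ∀ᵐ y, H y < ∞)
    (hx : rieszPotential volume a H x = ∞) : rieszPot a (fun y => (H y).toReal) x = ∞ := by
  have : Nonempty (Fin n) := ⟨⟨0, hn⟩⟩
  have hae : ∀ᵐ y, ENNReal.ofReal (H y).toReal * ENNReal.ofReal (‖x - y‖ ^ (a - n)) =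
      H y * ‖-y + x‖ₑ ^ (a - Module.finrank ℝ (Euc n)) := by
    filter_upwards [hH, measure_eq_zero_iff_ae_notMem.1 (measure_singleton x)] with y hy hyx
    rw [finrank_euclideanSpace_fin, ENNReal.ofReal_toReal hy.ne, neg_add_eq_sub, ← ofReal_norm,
      ENNReal.ofReal_rpow_of_pos (norm_pos_iff.2 (sub_ne_zero.2 (Ne.symm hyx)))]
  rw [rieszPot, lintegral_congr_ae hae]
  exact (congrArg _ hx).trans (ENNReal.mul_top (ENNReal.inv_ne_zero.2 ENNReal.ofReal_ne_top))

theorem rieszCap_le_lintegral_rpow (hn : 0 < n) (hp : 0 < p) (hH : Measurable H)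
    (hint : ∫⁻ y, H y ^ p ≠ ∞) (hS : ∀ x ∈ S, rieszPotential volume a H x = ∞) :
    rieszCap a p S ≤ ∫⁻ y, H y ^ p := by
  have hfin : ∀ᵐ y, H y < ∞ := by
    filter_upwards [ae_lt_top (hH.pow_const p) hint] with y hy
    exact (ENNReal.rpow_lt_top_iff_of_pos hp).1 hy
  have hlint : ∫⁻ y, ENNReal.ofReal (H y).toReal ^ p = ∫⁻ y, H y ^ p :=
    lintegral_congr_ae (hfin.mono fun y hy => by simp only [ENNReal.ofReal_toReal hy.ne])
  refine (iInf₂_le (fun y => (H y).toReal) ⟨⟨hH.ennreal_toReal.aestronglyMeasurable, ?_⟩,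
    fun y => ENNReal.toReal_nonneg, fun x hx => ?_⟩).trans_eq hlint
  · rw [eLpNorm_lt_top_iff_lintegral_rpow_enorm_lt_top (by simpa using hp) ENNReal.ofReal_ne_top,
      ENNReal.toReal_ofReal hp.le]
    simp only [Real.enorm_of_nonneg ENNReal.toReal_nonneg]
    exact hlint.trans_lt hint.lt_top
  · rw [rieszPot_toReal_eq_top hn hfin (hS x hx)]
    exact le_top

theorem rieszCap_eq_zero_of_rieszPotential_eq_top (hn : 0 < n) (hp : 0 < p) (hH : Measurable H)
    (hint : ∫⁻ y, H y ^ p ≠ ∞) (hS : ∀ x ∈ S, rieszPotential volume a H x = ∞) :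
    rieszCap a p S = 0 := by
  have hscale (t : ℝ≥0) (ht : t ∈ Ioi 0) :
      rieszCap a p S ≤ (t : ℝ≥0∞) ^ p * ∫⁻ y, H y ^ p := by
    have ht0 : (t : ℝ≥0∞) ≠ 0 := ENNReal.coe_ne_zero.2 (ne_of_gt ht)
    have htH : ∫⁻ y, (t * H y) ^ p = (t : ℝ≥0∞) ^ p * ∫⁻ y, H y ^ p := by
      simp only [ENNReal.mul_rpow_of_nonneg _ _ hp.le]
      exact lintegral_const_mul _ (hH.pow_const p)
    rw [← htH]
    refine rieszCap_le_lintegral_rpow hn hp (hH.const_mul _) ?_ fun x hx => ?_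
    · rw [htH]
      exact ENNReal.mul_ne_top (ENNReal.rpow_ne_top_of_nonneg hp.le ENNReal.coe_ne_top) hint
    · rw [rieszPotential_const_mul hH, hS x hx, ENNReal.mul_top ht0]
  have hlim : Tendsto (fun t : ℝ≥0 => (t : ℝ≥0∞) ^ p * ∫⁻ y, H y ^ p) (𝓝[>] 0) (𝓝 0) := by
    have hcoe : Tendsto (fun t : ℝ≥0 => (t : ℝ≥0∞) ^ p) (𝓝 0) (𝓝 0) := by
      simpa [Function.comp_def, ENNReal.zero_rpow_of_pos hp] using
        ((ENNReal.continuous_rpow_const (y := p)).comp ENNReal.continuous_coe).tendsto 0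
    simpa using (ENNReal.Tendsto.mul_const hcoe (.inr hint)).mono_left nhdsWithin_le_nhds
  exact nonpos_iff_eq_zero.1 (ge_of_tendsto hlim (eventually_nhdsWithin_of_forall hscale))

theorem rieszCap_eq_zero_of_forall_exists_rieszPotential_eq_top {ι : Type*} [Countable ι]
    {h : ι → Euc n → ℝ≥0∞} (hn : 0 < n) (hp : 0 < p) (hh : ∀ j, Measurable (h j))
    (hint : ∀ j, ∫⁻ y, h j y ^ p ≠ ∞) (hS : ∀ x ∈ S, ∃ j, rieszPotential volume a (h j) x = ∞) :
    rieszCap a p S = 0 := by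
  obtain ⟨H, hH, hHint, hle⟩ := exists_measurable_lintegral_rpow_ne_top_of_countable hp hh hint
  refine rieszCap_eq_zero_of_rieszPotential_eq_top hn hp hH hHint fun x hx => ?_
  obtain ⟨j, hj⟩ := hS x hx
  obtain ⟨c, hc0, hc⟩ := hle j
  rw [eq_top_iff, ← ENNReal.mul_top hc0, ← hj, ← rieszPotential_const_mul (hh j)]
  exact rieszPotential_mono hc x

end RieszCapacity

section SmoothHajlasz

variable {E F : Type*} [NormedAddCommGroup E] [NormedSpace ℝ E]
  [NormedAddCommGroup F] [NormedSpace ℝ F] {w : E → F}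

theorem enorm_sub_le_mul_lintegral_enorm_fderiv_lineMap (hw : ContDiff ℝ 1 w) (x z : E) :
    ‖w z - w x‖ₑ ≤ ‖z - x‖ₑ * ∫⁻ t in Ioo (0 : ℝ) 1, ‖fderiv ℝ w (AffineMap.lineMap x z t)‖ₑ := by
  have hderiv (t : ℝ) : HasDerivAt (fun t : ℝ => w (AffineMap.lineMap x z t))
      (fderiv ℝ w (AffineMap.lineMap x z t) (z - x)) t :=
    (hw.differentiable one_ne_zero _).hasFDerivAt.comp_hasDerivAt t AffineMap.hasDerivAt_lineMap
  have hsmooth : ContDiff ℝ 1 fun t : ℝ => w (AffineMap.lineMap x z t) :=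
    hw.comp (AffineMap.contDiff_lineMap x z)
  have hline := enorm_sub_le_lintegral_deriv_of_contDiffOn_Icc hsmooth.contDiffOn zero_le_one
  simp only [AffineMap.lineMap_apply_one, AffineMap.lineMap_apply_zero, (hderiv _).deriv] at hline
  rw [← Measure.restrict_congr_set Ioo_ae_eq_Icc] at hline
  refine hline.trans ?_
  rw [← lintegral_const_mul' _ _ enorm_ne_top]
  exact lintegral_mono fun t => (ContinuousLinearMap.le_opENorm _ _).trans_eq (mul_comm _ _)

variable [MeasurableSpace E] [BorelSpace E] [FiniteDimensional ℝ E] {μ : Measure E}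
  [μ.IsAddHaarMeasure] {C : ℝ≥0∞} {G : E → ℝ≥0∞}

theorem map_homothety_addHaar (x : E) {t : ℝ} (ht : t ≠ 0) :
    μ.map (AffineMap.homothety x t) = ENNReal.ofReal |(t ^ Module.finrank ℝ E)⁻¹| • μ := by
  have hcomp : (AffineMap.homothety x t : E → E) = (· + (x - t • x)) ∘ (t • ·) := by
    ext z
    simp only [AffineMap.homothety_apply, vsub_eq_sub, vadd_eq_add, Function.comp_apply, smul_sub]
    abel
  rw [hcomp, ← Measure.map_map (measurable_add_const _) (measurable_const_smul t),
    Measure.map_addHaar_smul μ ht, Measure.map_smul, map_add_right_eq_self]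

theorem IsA1Weight.setLIntegral_ball_lineMap_le (hG : IsA1Weight μ C G) (x : E) (r : ℝ) {t : ℝ}
    (ht : 0 < t) :
    ∫⁻ z in ball x r, G (AffineMap.lineMap x z t) ∂μ ≤ C * μ (ball x r) * G x := by
  have hpre : AffineMap.homothety x t ⁻¹' ball x (t * r) = ball x r := by
    ext z
    rw [mem_preimage, mem_ball, dist_homothety_center, Real.norm_of_nonneg ht.le, mem_ball,
      mul_lt_mul_iff_right₀ ht, dist_comm]
  have hscale :
      ENNReal.ofReal |(t ^ Module.finrank ℝ E)⁻¹| * μ (ball x (t * r)) = μ (ball x r) := by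
    rw [← hpre, ← Measure.map_apply (AffineMap.homothety_continuous x t).measurable
      measurableSet_ball, map_homothety_addHaar x ht.ne', Measure.smul_apply, smul_eq_mul]
  calc ∫⁻ z in ball x r, G (AffineMap.lineMap x z t) ∂μ
      = ∫⁻ z in ball x (t * r), G z ∂μ.map (AffineMap.homothety x t) := by
        rw [setLIntegral_map measurableSet_ball hG.measurable
          (AffineMap.homothety_continuous x t).measurable, hpre]
        rfl
    _ = ENNReal.ofReal |(t ^ Module.finrank ℝ E)⁻¹| * ∫⁻ z in ball x (t * r), G z ∂μ := by
        rw [map_homothety_addHaar x ht.ne', Measure.restrict_smul, lintegral_smul_measure,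
          smul_eq_mul]
    _ ≤ C * μ (ball x r) * G x := by
        grw [hG.setLIntegral_ball_le, ← hscale]
        exact le_of_eq (by ring)

theorem IsA1Weight.setLIntegral_ball_enorm_sub_le (hG : IsA1Weight μ C G) (hw : ContDiff ℝ 1 w)
    (hwG : ∀ z, ‖fderiv ℝ w z‖ₑ ≤ G z) (x : E) (r : ℝ) :
    ∫⁻ z in ball x r, ‖w z - w x‖ₑ ∂μ ≤ ENNReal.ofReal r * (C * μ (ball x r) * G x) := by
  have hGm := hG.measurable
  have hline : Measurable fun q : E × ℝ => G (AffineMap.lineMap x q.1 q.2) :=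
    hGm.comp (by simp only [AffineMap.lineMap_apply]; fun_prop)
  calc ∫⁻ z in ball x r, ‖w z - w x‖ₑ ∂μ
      ≤ ∫⁻ z in ball x r, (ENNReal.ofReal r *
          ∫⁻ t in Ioo (0 : ℝ) 1, G (AffineMap.lineMap x z t)) ∂μ := by
        refine setLIntegral_mono' measurableSet_ball fun z hz => ?_
        grw [enorm_sub_le_mul_lintegral_enorm_fderiv_lineMap hw x z, ← ofReal_norm, ← dist_eq_norm,
          (mem_ball.1 hz).le]
        gcongr
        exact hwG _
    _ = ENNReal.ofReal r *
          ∫⁻ t in Ioo (0 : ℝ) 1, ∫⁻ z in ball x r, G (AffineMap.lineMap x z t) ∂μ := by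
        rw [lintegral_const_mul' _ _ ENNReal.ofReal_ne_top,
          lintegral_lintegral_swap hline.aemeasurable]
    _ ≤ ENNReal.ofReal r * ∫⁻ _ in Ioo (0 : ℝ) 1, C * μ (ball x r) * G x := by
        exact mul_le_mul' le_rfl (setLIntegral_mono' measurableSet_Ioo fun t ht =>
          hG.setLIntegral_ball_lineMap_le x r ht.1)
    _ = ENNReal.ofReal r * (C * μ (ball x r) * G x) := by simp

theorem IsA1Weight.enorm_sub_le (hG : IsA1Weight μ C G) (hw : ContDiff ℝ 1 w)
    (hwG : ∀ z, ‖fderiv ℝ w z‖ₑ ≤ G z) (x y : E) :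
    ‖w x - w y‖ₑ ≤ ‖x - y‖ₑ * (2 ^ Module.finrank ℝ E * C * (G x + G y)) := by
  rcases eq_or_ne x y with rfl | hxy
  · simp
  set V := ball (midpoint ℝ x y) (dist x y / 2)
  have hdist : 0 < dist x y := dist_pos.2 hxy
  have hV0 : μ V ≠ 0 := (measure_ball_pos _ _ (half_pos hdist)).ne'
  have hball (q : E) : μ (ball q (dist x y)) = 2 ^ Module.finrank ℝ E * μ V := by
    rw [← mul_div_cancel₀ (dist x y) two_ne_zero, Measure.addHaar_ball_mul_of_pos μ q two_pos,
      ← Measure.addHaar_ball_center μ (midpoint ℝ x y), ENNReal.ofReal_pow zero_le_two,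
      ENNReal.ofReal_ofNat]
  have hVx : V ⊆ ball x (dist x y) :=
    ball_subset_ball' (by rw [dist_midpoint_left, Real.norm_ofNat]; linarith)
  have hVy : V ⊆ ball y (dist x y) :=
    ball_subset_ball' (by rw [dist_midpoint_right, Real.norm_ofNat]; linarith)
  have hmeas : Measurable fun z => ‖w z - w x‖ₑ :=
    (hw.continuous.sub continuous_const).enorm.measurable
  rw [← ENNReal.mul_le_mul_iff_left hV0 measure_ball_ne_top, ← setLIntegral_const]
  calc ∫⁻ _ in V, ‖w x - w y‖ₑ ∂μ ≤ ∫⁻ z in V, (‖w z - w x‖ₑ + ‖w z - w y‖ₑ) ∂μ := by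
        refine lintegral_mono fun z => ?_
        simpa only [edist_eq_enorm_sub] using edist_triangle_left (w x) (w y) (w z)
    _ ≤ (∫⁻ z in ball x (dist x y), ‖w z - w x‖ₑ ∂μ) +
          ∫⁻ z in ball y (dist x y), ‖w z - w y‖ₑ ∂μ := by
        rw [lintegral_add_left hmeas]
        gcongr
    _ ≤ ENNReal.ofReal (dist x y) * (C * (2 ^ Module.finrank ℝ E * μ V) * G x) +
          ENNReal.ofReal (dist x y) * (C * (2 ^ Module.finrank ℝ E * μ V) * G y) := by
        grw [hG.setLIntegral_ball_enorm_sub_le hw hwG, hG.setLIntegral_ball_enorm_sub_le hw hwG,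
          hball, hball]
    _ = ‖x - y‖ₑ * (2 ^ Module.finrank ℝ E * C * (G x + G y)) * μ V := by
        rw [dist_eq_norm, ofReal_norm]
        ring

end SmoothHajlasz

section HajlaszGradient

theorem enorm_integral_sub_integral_le_of_ae {X F : Type*} [MeasurableSpace X]
    [NormedAddCommGroup F] [NormedSpace ℝ F] {μ ν : Measure X} [IsProbabilityMeasure μ]
    [IsProbabilityMeasure ν] {u : X → F} {G : X → ℝ≥0∞} {D : ℝ≥0∞} (hμ : Integrable u μ)
    (hν : Integrable u ν) (hG : Measurable G)
    (hu : ∀ᵐ x ∂μ, ∀ᵐ y ∂ν, ‖u x - u y‖ₑ ≤ D * (G x + G y)) :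
    ‖∫ x, u x ∂μ - ∫ y, u y ∂ν‖ₑ ≤ D * (∫⁻ x, G x ∂μ + ∫⁻ y, G y ∂ν) := by
  by_cases hF : CompleteSpace F
  swap
  · simp [integral, hF]
  have hdouble : ∫ x, u x ∂μ - ∫ y, u y ∂ν = ∫ x, ∫ y, (u x - u y) ∂ν ∂μ := by
    have hinner (x : X) : ∫ y, (u x - u y) ∂ν = u x - ∫ y, u y ∂ν := by
      rw [integral_sub (integrable_const _) hν, integral_const, probReal_univ, one_smul]
    simp only [hinner]
    rw [integral_sub hμ (integrable_const _), integral_const, probReal_univ, one_smul]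
  calc ‖∫ x, u x ∂μ - ∫ y, u y ∂ν‖ₑ ≤ ∫⁻ x, ∫⁻ y, ‖u x - u y‖ₑ ∂ν ∂μ := by
        rw [hdouble]
        exact (enorm_integral_le_lintegral_enorm _).trans
          (lintegral_mono fun x => enorm_integral_le_lintegral_enorm _)
    _ ≤ ∫⁻ x, ∫⁻ y, D * (G x + G y) ∂ν ∂μ :=
        lintegral_mono_ae (hu.mono fun x hx => lintegral_mono_ae hx)
    _ = D * (∫⁻ x, G x ∂μ + ∫⁻ y, G y ∂ν) := by
        simp only [lintegral_const_mul D (hG.const_add _), lintegral_add_right _ hG,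
          lintegral_const, measure_univ, mul_one]
        rw [lintegral_const_mul D (hG.add_const _), lintegral_add_left hG, lintegral_const,
          measure_univ, mul_one]

/-- `G` is a Hajłasz gradient of `u` on `B`: a weight controlling the difference quotients of `u`
outside a null set. -/
def IsHajlaszGradientOn {E F : Type*} [NormedAddCommGroup E] [MeasurableSpace E]
    [NormedAddCommGroup F] (μ : Measure E) (u : E → F) (G : E → ℝ≥0∞) (B : Set E) : Prop :=
  ∀ᵐ x ∂μ.restrict B, ∀ᵐ y ∂μ.restrict B, ‖u x - u y‖ₑ ≤ ‖x - y‖ₑ * (G x + G y)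

variable {E F : Type*} [MeasurableSpace E] {μ : Measure E} {C : ℝ≥0∞} {G : E → ℝ≥0∞}

theorem IsA1Weight.setLAverage_ball_le [PseudoMetricSpace E] (hG : IsA1Weight μ C G) (x : E)
    (r : ℝ) : ⨍⁻ y in ball x r, G y ∂μ ≤ C * G x := by
  rw [setLAverage_eq]
  refine ENNReal.div_le_of_le_mul ((hG.setLIntegral_ball_le x r).trans_eq ?_)
  ring

variable [NormedAddCommGroup E] [NormedSpace ℝ E] [FiniteDimensional ℝ E] [BorelSpace E]
  [μ.IsAddHaarMeasure] [NormedAddCommGroup F] [NormedSpace ℝ F] {u : E → F} {B : Set E}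

theorem IsHajlaszGradientOn.enorm_setAverage_sub_setAverage_le (hu : IsHajlaszGradientOn μ u G B)
    (hint : IntegrableOn u B μ) (hG : IsA1Weight μ C G) {x y : E} {ε δ : ℝ} (hε : 0 < ε)
    (hδ : 0 < δ) (hx : ball x ε ⊆ B) (hy : ball y δ ⊆ B) :
    ‖(⨍ z in ball x ε, u z ∂μ) - ⨍ z in ball y δ, u z ∂μ‖ₑ ≤
      (‖x - y‖ₑ + ENNReal.ofReal (ε + δ)) * (C * (G x + G y)) := by
  have havg (z : E) {r : ℝ} (hr : 0 < r) :
      IsProbabilityMeasure (((μ.restrict (ball z r)) univ)⁻¹ • μ.restrict (ball z r)) :=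
    have : NeZero (μ.restrict (ball z r)) :=
      ⟨mt Measure.restrict_eq_zero.1 (measure_ball_pos μ z hr).ne'⟩
    have : IsFiniteMeasure (μ.restrict (ball z r)) :=
      isFiniteMeasure_restrict.2 measure_ball_ne_top
    isProbabilityMeasureSMul
  have := havg x hε
  have := havg y hδ
  refine (enorm_integral_sub_integral_le_of_ae (u := u) (G := G)
    (D := ‖x - y‖ₑ + ENNReal.ofReal (ε + δ))
    (hint.mono_set hx).to_average (hint.mono_set hy).to_average hG.measurable ?_).trans ?_
  · refine Measure.ae_smul_measure ?_ _
    filter_upwards [ae_restrict_of_ae_restrict_of_subset hx hu, ae_restrict_mem measurableSet_ball]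
      with a ha hax
    refine Measure.ae_smul_measure ?_ _
    filter_upwards [ae_restrict_of_ae_restrict_of_subset hy ha, ae_restrict_mem measurableSet_ball]
      with b hb hby
    refine hb.trans ?_
    gcongr
    rw [← ofReal_norm, ← ofReal_norm, ← ENNReal.ofReal_add (norm_nonneg _) (by positivity),
      ← dist_eq_norm, ← dist_eq_norm]
    refine ENNReal.ofReal_le_ofReal ?_
    linarith [dist_triangle4 a x y b, mem_ball.1 hax, mem_ball'.1 hby]
  · rw [mul_add C]
    gcongr
    exacts [hG.setLAverage_ball_le x ε, hG.setLAverage_ball_le y δ]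

end HajlaszGradient

section PreciseRepresentative

variable {n : ℕ} {F : Type*} [NormedAddCommGroup F] [NormedSpace ℝ F] [CompleteSpace F]
  {u : Euc n → F} {C : ℝ≥0∞} {G : Euc n → ℝ≥0∞} {B : Set (Euc n)} {x y : Euc n}

theorem IsHajlaszGradientOn.tendsto_setAverage (hu : IsHajlaszGradientOn volume u G B)
    (hint : IntegrableOn u B) (hG : IsA1Weight volume C G) (hC : C ≠ ∞) (hB : IsOpen B)
    (hx : x ∈ B) (hGx : G x ≠ ∞) :
    Tendsto (fun ε : ℝ => ⨍ z in ball x ε, u z) (𝓝[>] 0) (𝓝 (preciseRepV u x)) := by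
  let A (ε : ℝ) : F := ⨍ z in ball x ε, u z
  obtain ⟨r, hr, hxr⟩ := Metric.isOpen_iff.1 hB x hx
  have hbound : ∀ᶠ q : ℝ × ℝ in 𝓝[>] 0 ×ˢ 𝓝[>] 0,
      dist (A q.1) (A q.2) ≤ (q.1 + q.2) * (C * (G x + G x)).toReal := by
    have hsmall : ∀ᶠ ε : ℝ in 𝓝[>] 0, ε ∈ Ioo 0 r := Ioo_mem_nhdsGT hr
    filter_upwards [hsmall.prod_mk hsmall] with ⟨ε, δ⟩ ⟨hε, hδ⟩
    have := hu.enorm_setAverage_sub_setAverage_le hint hG hε.1 hδ.1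
      ((ball_subset_ball hε.2.le).trans hxr) ((ball_subset_ball hδ.2.le).trans hxr)
    rw [sub_self, enorm_zero, zero_add] at this
    rw [dist_eq_norm, ← toReal_enorm, ← ENNReal.toReal_ofReal (add_pos hε.1 hδ.1).le,
      ← ENNReal.toReal_mul]
    exact ENNReal.toReal_mono (by finiteness) this
  have hzero : Tendsto (fun q : ℝ × ℝ => (q.1 + q.2) * (C * (G x + G x)).toReal)
      (𝓝[>] 0 ×ˢ 𝓝[>] 0) (𝓝 0) := by
    have hcont : Continuous fun q : ℝ × ℝ => (q.1 + q.2) * (C * (G x + G x)).toReal := by fun_prop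
    have hle : 𝓝[>] (0 : ℝ) ×ˢ 𝓝[>] (0 : ℝ) ≤ 𝓝 (0, 0) :=
      (Filter.prod_mono nhdsWithin_le_nhds nhdsWithin_le_nhds).trans_eq nhds_prod_eq.symm
    simpa using (hcont.tendsto (0, 0)).mono_left hle
  have hlim : ∃ L, Tendsto A (𝓝[>] 0) (𝓝 L) :=
    cauchy_map_iff_exists_tendsto.1 <| cauchy_map_iff.2 ⟨inferInstance,
      tendsto_uniformity_iff_dist_tendsto_zero.2 <|
        squeeze_zero' (.of_forall fun _ => dist_nonneg) hbound hzero⟩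
  rw [preciseRepV, dif_pos hlim]
  exact hlim.choose_spec

theorem IsHajlaszGradientOn.enorm_preciseRepV_sub_le (hu : IsHajlaszGradientOn volume u G B)
    (hint : IntegrableOn u B) (hG : IsA1Weight volume C G) (hC : C ≠ ∞) (hB : IsOpen B)
    (hx : x ∈ B) (hy : y ∈ B) (hGx : G x ≠ ∞) (hGy : G y ≠ ∞) :
    ‖preciseRepV u x - preciseRepV u y‖ₑ ≤ ‖x - y‖ₑ * (C * (G x + G y)) := by
  obtain ⟨r, hr, hxr⟩ := Metric.isOpen_iff.1 hB x hx
  obtain ⟨s, hs, hys⟩ := Metric.isOpen_iff.1 hB y hy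
  have hlim : Tendsto (fun ε : ℝ => (‖x - y‖ₑ + ENNReal.ofReal (ε + ε)) * (C * (G x + G y)))
      (𝓝[>] 0) (𝓝 ((‖x - y‖ₑ + ENNReal.ofReal (0 + 0)) * (C * (G x + G y)))) := by
    refine ENNReal.Tendsto.mul_const (Tendsto.mono_left ?_ nhdsWithin_le_nhds)
      (.inr (by finiteness))
    exact (continuous_const.add (ENNReal.continuous_ofReal.comp
      (continuous_id.add continuous_id))).tendsto 0
  rw [add_zero, ENNReal.ofReal_zero, add_zero] at hlim
  refine le_of_tendsto_of_tendsto ((hu.tendsto_setAverage hint hG hC hB hx hGx).sub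
    (hu.tendsto_setAverage hint hG hC hB hy hGy)).enorm hlim ?_
  filter_upwards [Ioo_mem_nhdsGT (lt_min hr hs)] with ε hε
  exact hu.enorm_setAverage_sub_setAverage_le hint hG hε.1 hε.1
    ((ball_subset_ball (hε.2.le.trans (min_le_left _ _))).trans hxr)
    ((ball_subset_ball (hε.2.le.trans (min_le_right _ _))).trans hys)

theorem IsHajlaszGradientOn.exists_lipschitzOnWith_preciseRepV
    (hu : IsHajlaszGradientOn volume u G B) (hint : IntegrableOn u B) (hG : IsA1Weight volume C G)
    (hC : C ≠ ∞) (hB : IsOpen B) (N : ℝ≥0) :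
    ∃ K, LipschitzOnWith K (preciseRepV u) (B ∩ {x | G x ≤ N}) := by
  have hK : C * (N + N) ≠ ∞ := by finiteness
  refine ⟨(C * (N + N)).toNNReal, fun x ⟨hx, hGx⟩ y ⟨hy, hGy⟩ => ?_⟩
  rw [mem_ofPred_eq] at hGx hGy
  rw [edist_eq_enorm_sub, edist_eq_enorm_sub, ENNReal.coe_toNNReal hK, mul_comm]
  refine (hu.enorm_preciseRepV_sub_le hint hG hC hB hx hy
    (ne_top_of_le_ne_top ENNReal.coe_ne_top hGx)
    (ne_top_of_le_ne_top ENNReal.coe_ne_top hGy)).trans ?_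
  gcongr

end PreciseRepresentative

section RayEstimate

theorem lintegral_Ioi_mul_lintegral_Ioi_add_le {g F : ℝ → ℝ≥0∞} (hg : Measurable g)
    (hmono : MonotoneOn g (Ioi 0)) (hF : Measurable F) :
    ∫⁻ t in Ioi 0, g t * ∫⁻ s in Ioi 0, F (t + s) ≤
      ∫⁻ s in Ioi 0, ENNReal.ofReal s * (g s * F s) := by
  let K : ℝ × ℝ → ℝ≥0∞ := {q | q.1 < q.2}.indicator fun q => g q.1 * F q.2
  have hK : Measurable K :=
    (by fun_prop : Measurable fun q : ℝ × ℝ => g q.1 * F q.2).indicator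
      (measurableSet_lt measurable_fst measurable_snd)
  have htail (t : ℝ) (ht : t ∈ Ioi 0) :
      g t * ∫⁻ s in Ioi 0, F (t + s) = ∫⁻ s in Ioi 0, K (t, s) := by
    have hshift := (measurePreserving_add_left volume t).setLIntegral_comp_preimage
      (measurableSet_Ioi (a := t)) hF
    rw [preimage_const_add_Ioi, sub_self] at hshift
    have hKt : (fun s => K (t, s)) = (Ioi t).indicator fun s => g t * F s := rfl
    rw [hshift, hKt, setLIntegral_indicator measurableSet_Ioi, Ioi_inter_Ioi,
      max_eq_left (le_of_lt ht), lintegral_const_mul _ hF]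
  have hslice (s : ℝ) (hs : s ∈ Ioi 0) :
      ∫⁻ t in Ioi 0, K (t, s) ≤ ENNReal.ofReal s * (g s * F s) := by
    have hKs : (fun t => K (t, s)) = (Iio s).indicator fun t => g t * F s := rfl
    rw [hKs, setLIntegral_indicator measurableSet_Iio, Iio_inter_Ioi]
    calc ∫⁻ t in Ioo 0 s, g t * F s ≤ ∫⁻ _ in Ioo 0 s, g s * F s :=
          setLIntegral_mono' measurableSet_Ioo fun t ht =>
            mul_le_mul' (hmono ht.1 hs ht.2.le) le_rfl
      _ = ENNReal.ofReal s * (g s * F s) := by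
          rw [setLIntegral_const, Real.volume_Ioo, sub_zero, mul_comm]
  rw [setLIntegral_congr_fun measurableSet_Ioi htail,
    lintegral_lintegral_swap (f := fun t s => K (t, s)) hK.aemeasurable]
  exact setLIntegral_mono' measurableSet_Ioi hslice

variable {E F : Type*} [NormedAddCommGroup E] [NormedSpace ℝ E] [NormedAddCommGroup F]
  [NormedSpace ℝ F] {w : E → F} {z : E}

theorem enorm_le_lintegral_Ioi_enorm_fderiv (hw : ContDiff ℝ 1 w) (hc : HasCompactSupport w)
    (hz : ‖z‖ = 1) (x : E) : ‖w x‖ₑ ≤ ∫⁻ t in Ioi (0 : ℝ), ‖fderiv ℝ w (x + t • z)‖ₑ := by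
  have hz0 : z ≠ 0 := norm_ne_zero_iff.1 (hz ▸ one_ne_zero)
  let f (s : ℝ) : F := w (x - s • z)
  have hf : ContDiff ℝ 1 f := hw.comp (by fun_prop)
  have hfc : HasCompactSupport f := hc.comp_isClosedEmbedding
    ((Homeomorph.subLeft x).isClosedEmbedding.comp (isClosedEmbedding_smul_left hz0))
  have hderiv (s : ℝ) : HasDerivAt f (fderiv ℝ w (x - s • z) (-z)) s := by
    have hline : HasDerivAt (fun s : ℝ => x - s • z) (-z) s := by
      simpa using ((hasDerivAt_id s).smul_const z).const_sub x
    exact (hw.differentiable one_ne_zero _).hasFDerivAt.comp_hasDerivAt s hline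
  calc ‖w x‖ₑ = ‖f 0‖ₑ := by simp [f]
    _ ≤ ∫⁻ s in Iic (0 : ℝ), ‖deriv f s‖ₑ := hfc.enorm_le_lintegral_Ici_deriv hf 0
    _ ≤ ∫⁻ s in Iic (0 : ℝ), ‖fderiv ℝ w (x + (-s) • z)‖ₑ := by
        refine lintegral_mono fun s => ?_
        rw [(hderiv s).deriv, neg_smul, ← sub_eq_add_neg]
        refine (ContinuousLinearMap.le_opENorm _ _).trans_eq ?_
        rw [enorm_neg, ← ofReal_norm z, hz, ENNReal.ofReal_one, mul_one]
    _ = ∫⁻ t in Ioi (0 : ℝ), ‖fderiv ℝ w (x + t • z)‖ₑ := by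
        have hneg := (Measure.measurePreserving_neg volume).setLIntegral_comp_preimage_emb
          (MeasurableEquiv.neg ℝ).measurableEmbedding (fun t => ‖fderiv ℝ w (x + t • z)‖ₑ) (Ici 0)
        rw [neg_preimage, neg_Ici, neg_zero] at hneg
        rw [hneg, Measure.restrict_congr_set Ioi_ae_eq_Ici]

theorem enorm_le_lintegral_Ioi_pow_mul_enorm_iteratedFDeriv {m : ℕ} (hw : ContDiff ℝ (m + 1) w)
    (hc : HasCompactSupport w) (hz : ‖z‖ = 1) (x : E) :
    ‖w x‖ₑ ≤ ∫⁻ t in Ioi (0 : ℝ),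
      ENNReal.ofReal (t ^ m) * ‖iteratedFDeriv ℝ (m + 1) w (x + t • z)‖ₑ := by
  induction m with
  | zero =>
    have hfderiv (y : E) : ‖fderiv ℝ w y‖ₑ = ‖iteratedFDeriv ℝ 1 w y‖ₑ := by
      rw [← ofReal_norm, ← ofReal_norm, norm_iteratedFDeriv_one]
    simpa [hfderiv] using enorm_le_lintegral_Ioi_enorm_fderiv (by simpa using hw) hc hz x
  | succ m ih =>
    have hstep (y : E) : ‖iteratedFDeriv ℝ (m + 1) w y‖ₑ ≤
        ∫⁻ s in Ioi (0 : ℝ), ‖iteratedFDeriv ℝ (m + 1 + 1) w (y + s • z)‖ₑ := by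
      refine (enorm_le_lintegral_Ioi_enorm_fderiv (hw.iteratedFDeriv_right (by norm_cast; lia))
        (hc.iteratedFDeriv (m + 1)) hz y).trans_eq (lintegral_congr fun s => ?_)
      rw [← ofReal_norm, ← ofReal_norm, norm_fderiv_iteratedFDeriv]
    have hmeas : Measurable fun t : ℝ => ‖iteratedFDeriv ℝ (m + 1 + 1) w (x + t • z)‖ₑ :=
      ((hw.continuous_iteratedFDeriv (by norm_cast)).comp (by fun_prop)).enorm.measurable
    calc ‖w x‖ₑ ≤ ∫⁻ t in Ioi (0 : ℝ),
          ENNReal.ofReal (t ^ m) * ‖iteratedFDeriv ℝ (m + 1) w (x + t • z)‖ₑ :=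
          ih (hw.of_le (by norm_cast; lia))
      _ ≤ ∫⁻ t in Ioi (0 : ℝ), ENNReal.ofReal (t ^ m) *
            ∫⁻ s in Ioi (0 : ℝ), ‖iteratedFDeriv ℝ (m + 1 + 1) w (x + (t + s) • z)‖ₑ := by
          refine lintegral_mono fun t => mul_le_mul' le_rfl ((hstep _).trans_eq ?_)
          simp only [add_assoc, add_smul]
      _ ≤ ∫⁻ s in Ioi (0 : ℝ), ENNReal.ofReal s *
            (ENNReal.ofReal (s ^ m) * ‖iteratedFDeriv ℝ (m + 1 + 1) w (x + s • z)‖ₑ) :=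
          lintegral_Ioi_mul_lintegral_Ioi_add_le (by fun_prop)
            (fun s hs t _ hst => ENNReal.ofReal_le_ofReal
              (pow_le_pow_left₀ (le_of_lt hs) hst m)) hmeas
      _ = _ := by
          refine setLIntegral_congr_fun measurableSet_Ioi fun s hs => ?_
          rw [← mul_assoc, ← ENNReal.ofReal_mul (le_of_lt hs), ← pow_succ']

variable [FiniteDimensional ℝ E] [Nontrivial E] [MeasurableSpace E] [BorelSpace E]
  {μ : Measure E} [μ.IsAddHaarMeasure]

theorem rieszPotential_natCast_add_one_eq {h : E → ℝ≥0∞} (hh : Measurable h) (m : ℕ) (x : E) :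
    rieszPotential μ (m + 1) h x = ∫⁻ z : sphere (0 : E) 1, (∫⁻ t in Ioi (0 : ℝ),
      ENNReal.ofReal (t ^ m) * h (x + t • (z : E))) ∂μ.toSphere := by
  have hradial (z : sphere (0 : E) 1) (t : ℝ) (ht : t ∈ Ioi 0) :
      ENNReal.ofReal (t ^ (Module.finrank ℝ E - 1)) *
        (h (x + t • (z : E)) * ‖t • (z : E)‖ₑ ^ ((m : ℝ) + 1 - Module.finrank ℝ E)) =
      ENNReal.ofReal (t ^ m) * h (x + t • (z : E)) := by
    have hdim : 1 ≤ Module.finrank ℝ E := Module.finrank_pos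
    rw [mul_left_comm, mul_comm, ← ofReal_norm (t • _), norm_smul, norm_eq_of_mem_sphere, mul_one,
      Real.norm_of_nonneg (le_of_lt ht), ENNReal.ofReal_rpow_of_pos ht,
      ← ENNReal.ofReal_mul (pow_nonneg (le_of_lt ht) _), ← Real.rpow_natCast,
      ← Real.rpow_add ht, Nat.cast_sub hdim, ← Real.rpow_natCast]
    ring_nf
  calc rieszPotential μ (m + 1) h x
      = ∫⁻ v, h (x + v) * ‖v‖ₑ ^ ((m : ℝ) + 1 - Module.finrank ℝ E) ∂μ := by
        rw [rieszPotential, lconvolution_def, ← lintegral_add_left_eq_self _ x]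
        refine lintegral_congr fun v => ?_
        rw [neg_add_rev, neg_add_cancel_right, enorm_neg]
    _ = _ := by
        rw [lintegral_eq_lintegral_toSphere_lintegral_Ioi μ (by fun_prop)]
        exact lintegral_congr fun z => setLIntegral_congr_fun measurableSet_Ioi (hradial z)

theorem enorm_le_mul_rieszPotential_enorm_iteratedFDeriv {m : ℕ} (hw : ContDiff ℝ (m + 1) w)
    (hc : HasCompactSupport w) (x : E) :
    ‖w x‖ₑ ≤ (μ.toSphere univ)⁻¹ *
      rieszPotential μ (m + 1) (fun y => ‖iteratedFDeriv ℝ (m + 1) w y‖ₑ) x := by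
  have hmeas : Measurable fun y => ‖iteratedFDeriv ℝ (m + 1) w y‖ₑ :=
    (hw.continuous_iteratedFDeriv (by norm_cast)).enorm.measurable
  rw [rieszPotential_natCast_add_one_eq hmeas, ← ENNReal.div_eq_inv_mul,
    ENNReal.le_div_iff_mul_le (.inl (Measure.measure_univ_ne_zero.2 μ.toSphere_ne_zero))
      (.inl (measure_ne_top _ _)), ← lintegral_const]
  exact lintegral_mono fun z =>
    enorm_le_lintegral_Ioi_pow_mul_enorm_iteratedFDeriv hw hc (norm_eq_of_mem_sphere z) x

end RayEstimate

section Cutoff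

variable {E F : Type*} [NormedAddCommGroup E] [NormedSpace ℝ E] [NormedAddCommGroup F]
  [NormedSpace ℝ F] {χ : E → ℝ}

theorem exists_enorm_iteratedFDeriv_smul_le {N : ℕ} (hχ : ContDiff ℝ N χ)
    (hc : HasCompactSupport χ) :
    ∃ C : ℝ≥0, ∀ {w : E → F}, ContDiff ℝ N w → ∀ (x : E) (B : ℝ≥0∞),
      (x ∈ tsupport χ → ∀ j ≤ N, ‖iteratedFDeriv ℝ j w x‖ₑ ≤ B) →
      ‖iteratedFDeriv ℝ N (fun y => χ y • w y) x‖ₑ ≤ C * B := by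
  have hbdd (i : Finset.range (N + 1)) : ∃ M : ℝ≥0, ∀ x, ‖iteratedFDeriv ℝ i χ x‖ₑ ≤ M := by
    have hi : (i : ℕ) ≤ N := Nat.lt_succ_iff.1 (Finset.mem_range.1 i.2)
    obtain ⟨M, hM⟩ := (hc.iteratedFDeriv i).exists_bound_of_continuous
      (hχ.continuous_iteratedFDeriv (by exact_mod_cast hi))
    exact ⟨M.toNNReal, fun x => (ofReal_norm (iteratedFDeriv ℝ i χ x)).symm.trans_le
      (ENNReal.ofReal_le_ofReal (hM x))⟩
  choose M hM using hbdd
  refine ⟨∑ i : Finset.range (N + 1), (N.choose i : ℝ≥0) * M i, fun {w} hw x B hB => ?_⟩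
  by_cases hx : x ∈ tsupport χ
  · calc ‖iteratedFDeriv ℝ N (fun y => χ y • w y) x‖ₑ
        ≤ ENNReal.ofReal (∑ i ∈ Finset.range (N + 1),
            N.choose i * ‖iteratedFDeriv ℝ i χ x‖ * ‖iteratedFDeriv ℝ (N - i) w x‖) := by
          rw [← ofReal_norm]
          exact ENNReal.ofReal_le_ofReal (norm_iteratedFDeriv_smul_le hχ hw x le_rfl)
      _ = ∑ i : Finset.range (N + 1),
            N.choose i * ‖iteratedFDeriv ℝ i χ x‖ₑ * ‖iteratedFDeriv ℝ (N - i) w x‖ₑ := by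
          rw [← Finset.sum_coe_sort, ENNReal.ofReal_sum_of_nonneg fun i _ => by positivity]
          refine Finset.sum_congr rfl fun i _ => ?_
          rw [ENNReal.ofReal_mul (by positivity), ENNReal.ofReal_mul (by positivity), ofReal_norm,
            ofReal_norm, ENNReal.ofReal_natCast]
      _ ≤ ∑ i : Finset.range (N + 1), N.choose i * M i * B := by
          gcongr with i
          exacts [hM i x, hB hx _ (Nat.sub_le _ _)]
      _ = _ := by push_cast; rw [Finset.sum_mul]
  · have hzero : iteratedFDeriv ℝ N (fun y => χ y • w y) x = 0 :=
      Function.notMem_support.1 fun h =>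
        hx (tsupport_smul_subset_left χ w (support_iteratedFDeriv_subset N h))
    rw [← ofReal_norm, hzero, norm_zero, ENNReal.ofReal_zero]
    exact zero_le

variable [FiniteDimensional ℝ E] [Nontrivial E] [MeasurableSpace E] [BorelSpace E]
  {μ : Measure E} [μ.IsAddHaarMeasure]

theorem exists_enorm_fderiv_smul_le_rieszPotential {m : ℕ} (hχ : ContDiff ℝ (m + 2) χ)
    (hc : HasCompactSupport χ) :
    ∃ C : ℝ≥0, ∀ {w : E → F} {H : E → ℝ≥0∞}, ContDiff ℝ (m + 2) w → Measurable H →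
      (∀ x ∈ tsupport χ, ∀ j ≤ m + 2, ‖iteratedFDeriv ℝ j w x‖ₑ ≤ H x) →
      ∀ x, ‖fderiv ℝ (fun y => χ y • w y) x‖ₑ ≤ C * rieszPotential μ (m + 1) H x := by
  obtain ⟨C, hC⟩ := exists_enorm_iteratedFDeriv_smul_le (F := F) (N := m + 2)
    (by exact_mod_cast hχ) hc
  obtain ⟨σ, hσ⟩ : ∃ σ : ℝ≥0, (σ : ℝ≥0∞) = (μ.toSphere univ)⁻¹ :=
    ⟨_, ENNReal.coe_toNNReal
      (ENNReal.inv_ne_top.2 (Measure.measure_univ_ne_zero.2 μ.toSphere_ne_zero))⟩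
  refine ⟨σ * C, fun {w H} hw hH hwH x => ?_⟩
  have hsmul : ContDiff ℝ (m + 2) fun y => χ y • w y := hχ.smul hw
  calc ‖fderiv ℝ (fun y => χ y • w y) x‖ₑ
      ≤ (μ.toSphere univ)⁻¹ * rieszPotential μ (m + 1)
          (fun z => ‖iteratedFDeriv ℝ (m + 1) (fderiv ℝ fun y => χ y • w y) z‖ₑ) x :=
        enorm_le_mul_rieszPotential_enorm_iteratedFDeriv
          (hsmul.fderiv_right (by norm_cast)) (hc.smul_right.fderiv ℝ) x
    _ ≤ (μ.toSphere univ)⁻¹ * rieszPotential μ (m + 1) (fun z => C * H z) x := by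
        gcongr
        refine rieszPotential_mono (fun z => ?_) x
        rw [← ofReal_norm, norm_iteratedFDeriv_fderiv, ofReal_norm]
        exact hC (by exact_mod_cast hw) z _ (hwH z)
    _ = _ := by rw [rieszPotential_const_mul hH, ENNReal.coe_mul, hσ, mul_assoc]

end Cutoff

section Mollifier

variable {E : Type*} [NormedAddCommGroup E] [MeasurableSpace E] [BorelSpace E] {μ : Measure E}
  [μ.IsAddHaarMeasure] [NormedSpace ℝ E] [FiniteDimensional ℝ E]

theorem IsA1Weight.lconvolution_le {C Q : ℝ≥0∞} {ψ G : E → ℝ≥0∞}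
    {r : ℝ} (hG : IsA1Weight μ C G)
    (hψ : ∀ z, ψ z ≤ (ball (0 : E) r).indicator (fun _ => Q * (μ (ball 0 r))⁻¹) z) (x : E) :
    (ψ ⋆ₗ[μ] G) x ≤ Q * C * G x := by
  have hGm := hG.measurable
  have hball := (Measure.measurePreserving_sub_left μ x).setLIntegral_comp_preimage
    (measurableSet_ball (x := x) (ε := r)) hGm
  rw [show (fun y => x - y) ⁻¹' ball x r = ball 0 r by ext; simp] at hball
  calc (ψ ⋆ₗ[μ] G) x
      ≤ ∫⁻ y in ball 0 r, Q * (μ (ball 0 r))⁻¹ * G (-y + x) ∂μ := by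
        rw [lconvolution_def, ← lintegral_indicator measurableSet_ball]
        refine lintegral_mono fun y => (mul_le_mul' (hψ y) le_rfl).trans_eq ?_
        exact (indicator_mul_left (ball 0 r) (fun _ => Q * (μ (ball 0 r))⁻¹)
          fun y => G (-y + x)).symm
    _ = Q * (μ (ball 0 r))⁻¹ * ∫⁻ y in ball x r, G y ∂μ := by
        rw [lintegral_const_mul _ (by fun_prop), ← hball]
        simp only [neg_add_eq_sub]
    _ ≤ Q * (μ (ball 0 r))⁻¹ * (C * μ (ball 0 r) * G x) := by
        rw [← Measure.addHaar_ball_center μ x r]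
        gcongr
        exact hG.setLIntegral_ball_le x r
    _ = (μ (ball 0 r))⁻¹ * μ (ball 0 r) * (Q * C * G x) := by ring
    _ ≤ _ := mul_le_of_le_one_left' (ENNReal.inv_mul_le_one _)

theorem IsA1Weight.rieszPotential_lconvolution_le {a : ℝ} {C Q : ℝ≥0∞} {ψ h : E → ℝ≥0∞} {r : ℝ}
    (hA1 : IsA1Weight μ C (rieszPotential μ a h)) (hh : Measurable h) (hψm : Measurable ψ)
    (hψ : ∀ z, ψ z ≤ (ball (0 : E) r).indicator (fun _ => Q * (μ (ball 0 r))⁻¹) z) (x : E) :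
    rieszPotential μ a (h ⋆ₗ[μ] ψ) x ≤ Q * C * rieszPotential μ a h x := by
  have hassoc : rieszPotential μ a (h ⋆ₗ[μ] ψ) = ψ ⋆ₗ[μ] rieszPotential μ a h := by
    rw [rieszPotential, lconvolution_comm (f := h), ← lconvolution_assoc hψm hh (by fun_prop),
      rieszPotential]
  rw [hassoc]
  exact hA1.lconvolution_le hψ x

theorem enorm_contDiffBump_normed_le [Nontrivial E] [HasContDiffBump E]
    (b : ContDiffBump (0 : E)) {K : ℝ} (hb : b.rOut ≤ K * b.rIn) (z : E) :
    ‖b.normed μ z‖ₑ ≤ (ball 0 b.rOut).indicator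
      (fun _ => ENNReal.ofReal K ^ Module.finrank ℝ E * (μ (ball 0 b.rOut))⁻¹) z := by
  by_cases hz : z ∈ ball 0 b.rOut
  · have hK : 0 ≤ K := (pos_of_mul_pos_left (b.rOut_pos.trans_le hb) b.rIn_pos.le).le
    have hvol : μ.real (closedBall 0 b.rOut) = (μ (ball 0 b.rOut)).toReal := by
      rw [Measure.real, Measure.addHaar_closedBall_eq_addHaar_ball]
    have hpos : 0 < (μ (ball (0 : E) b.rOut)).toReal :=
      ENNReal.toReal_pos (measure_ball_pos _ _ b.rOut_pos).ne' measure_ball_lt_top.ne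
    rw [indicator_of_mem hz, ← ofReal_norm, Real.norm_of_nonneg (b.nonneg_normed z)]
    calc ENNReal.ofReal (b.normed μ z)
        ≤ ENNReal.ofReal (K ^ Module.finrank ℝ E / (μ (ball 0 b.rOut)).toReal) :=
          ENNReal.ofReal_le_ofReal (hvol ▸ b.normed_le_div_measure_closedBall_rOut μ K hb z)
      _ = _ := by
          rw [ENNReal.ofReal_div_of_pos hpos, ENNReal.ofReal_toReal measure_ball_lt_top.ne,
            div_eq_mul_inv, ENNReal.ofReal_pow hK]
  · have hzero : b.normed μ z = 0 := by
      rwa [← Function.notMem_support, b.support_normed_eq]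
    simp [hzero]

theorem enorm_convolution_lsmul_le {F : Type*} [NormedAddCommGroup F] [NormedSpace ℝ F]
    {ψ : E → ℝ} {g : E → F} {h : E → ℝ≥0∞} (hgh : ∀ᵐ y ∂μ, ‖g y‖ₑ ≤ h y) (x : E) :
    ‖convolution ψ g (ContinuousLinearMap.lsmul ℝ ℝ) μ x‖ₑ ≤ (h ⋆ₗ[μ] fun z => ‖ψ z‖ₑ) x := by
  rw [convolution_eq_swap, lconvolution_def]
  refine (enorm_integral_le_lintegral_enorm _).trans (lintegral_mono_ae ?_)
  filter_upwards [hgh] with y hy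
  rw [ContinuousLinearMap.lsmul_apply, enorm_smul, mul_comm, neg_add_eq_sub]
  gcongr

end Mollifier

section ListDeriv

variable {n : ℕ}

theorem contDiff_listDeriv {w : Euc n → ℝ} (hw : ContDiff ℝ (⊤ : ℕ∞) w) (l : List (Fin n)) :
    ContDiff ℝ (⊤ : ℕ∞) (listDeriv l w) := by
  induction l with
  | nil => exact hw
  | cons i l ih => exact (ih.fderiv_right (by simp)).clm_apply contDiff_const

theorem hasCompactSupport_listDeriv {w : Euc n → ℝ} (hw : HasCompactSupport w)
    (l : List (Fin n)) : HasCompactSupport (listDeriv l w) := by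
  induction l with
  | nil => exact hw
  | cons i l ih => exact ih.fderiv_apply ℝ (EuclideanSpace.single i 1)

theorem listDeriv_append (l l' : List (Fin n)) (w : Euc n → ℝ) :
    listDeriv (l ++ l') w = listDeriv l (listDeriv l' w) := by
  induction l with
  | nil => rfl
  | cons i l ih => rw [List.cons_append, listDeriv, listDeriv, ih]

theorem listDeriv_pair_comm {w : Euc n → ℝ} (hw : ContDiff ℝ (⊤ : ℕ∞) w) (i j : Fin n) :
    listDeriv [i, j] w = listDeriv [j, i] w := by
  have hd : Differentiable ℝ (fderiv ℝ w) :=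
    (hw.fderiv_right (m := 1) (WithTop.coe_le_coe.2 le_top)).differentiable one_ne_zero
  have hsecond (a b : Fin n) (x : Euc n) : listDeriv [a, b] w x =
      fderiv ℝ (fderiv ℝ w) x (EuclideanSpace.single a 1) (EuclideanSpace.single b 1) := by
    simp only [listDeriv]
    rw [fderiv_clm_apply (hd x) (differentiableAt_const _)]
    simp
  ext x
  rw [hsecond, hsecond]
  refine hw.contDiffAt.isSymmSndFDerivAt ?_ _ _
  rw [minSmoothness_of_isRCLikeNormedField]
  exact WithTop.coe_le_coe.2 (le_top : (2 : ℕ∞) ≤ ⊤)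

theorem listDeriv_eq_of_perm {l l' : List (Fin n)} (h : l.Perm l') {w : Euc n → ℝ}
    (hw : ContDiff ℝ (⊤ : ℕ∞) w) : listDeriv l w = listDeriv l' w := by
  induction h with
  | nil => rfl
  | cons i _ ih => rw [listDeriv, ih, listDeriv]
  | swap i j l => exact listDeriv_pair_comm (contDiff_listDeriv hw l) j i
  | trans _ _ ih ih' => rw [ih, ih']

theorem perm_flatMap_finRange_replicate_count (l : List (Fin n)) :
    l.Perm ((List.finRange n).flatMap fun i => List.replicate (l.count i) i) := by
  refine List.perm_iff_count.2 fun a => ?_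
  rw [List.count_flatMap, Function.comp_def, ← Fin.sum_univ_def]
  simp [List.count_replicate]

theorem mdeg_count (l : List (Fin n)) : mdeg (fun i => l.count i) = l.length := by
  rw [(perm_flatMap_finRange_replicate_count l).length_eq, List.length_flatMap, mdeg,
    Fin.sum_univ_def]
  simp only [List.length_replicate]

theorem listDeriv_eq_mderiv_count {w : Euc n → ℝ} (hw : ContDiff ℝ (⊤ : ℕ∞) w)
    (l : List (Fin n)) : listDeriv l w = mderiv (fun i => l.count i) w :=
  listDeriv_eq_of_perm (perm_flatMap_finRange_replicate_count l) hw

theorem listDeriv_comp_sub_left {w : Euc n → ℝ} (hw : ContDiff ℝ (⊤ : ℕ∞) w) (x : Euc n)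
    (l : List (Fin n)) :
    listDeriv l (fun y => w (x - y)) = fun y => (-1) ^ l.length * listDeriv l w (x - y) := by
  induction l with
  | nil => simp [listDeriv]
  | cons i l ih =>
    ext y
    have hl : DifferentiableAt ℝ (listDeriv l w) (x - y) :=
      (contDiff_listDeriv hw l).differentiable (by simp) _
    have hderiv := (hl.hasFDerivAt.comp y ((hasFDerivAt_id y).const_sub x)).const_mul
      ((-1 : ℝ) ^ l.length)
    rw [listDeriv, ih]
    refine (DFunLike.congr_fun hderiv.fderiv _).trans ?_
    simp [listDeriv, pow_succ]

theorem enorm_iteratedFDeriv_succ_le_sum {F : Type*} [NormedAddCommGroup F] [NormedSpace ℝ F]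
    {j : ℕ} {w : Euc n → F} (hw : ContDiff ℝ (j + 1) w) (x : Euc n) :
    ‖iteratedFDeriv ℝ (j + 1) w x‖ₑ ≤
      ∑ i, ‖iteratedFDeriv ℝ j (fun y => fderiv ℝ w y (EuclideanSpace.single i 1)) x‖ₑ := by
  let L (i : Fin n) : F →L[ℝ] Euc n →L[ℝ] F :=
    ContinuousLinearMap.smulRightL ℝ (Euc n) F (EuclideanSpace.proj i)
  have hL (i : Fin n) : ‖L i‖ ≤ 1 :=
    ((ContinuousLinearMap.le_opNorm _ _).trans (mul_le_mul
      (ContinuousLinearMap.norm_smulRightL_le) (ContinuousLinearMap.opNorm_le_bound _ zero_le_one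
        fun v => by simpa using PiLp.norm_apply_le v i) (norm_nonneg _) zero_le_one)).trans_eq
      (one_mul 1)
  have hdecomp : fderiv ℝ w =
      fun y => ∑ i, (L i ∘ fun y => fderiv ℝ w y (EuclideanSpace.single i 1)) y := by
    ext y v
    conv_lhs => rw [← (EuclideanSpace.basisFun (Fin n) ℝ).sum_repr v, map_sum]
    simp [L]
  have hw' (i : Fin n) : ContDiff ℝ j fun y => fderiv ℝ w y (EuclideanSpace.single i 1) :=
    (hw.fderiv_right le_rfl).clm_apply contDiff_const
  calc ‖iteratedFDeriv ℝ (j + 1) w x‖ₑ = ‖iteratedFDeriv ℝ j (fderiv ℝ w) x‖ₑ := by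
        rw [← ofReal_norm, ← norm_iteratedFDeriv_fderiv, ofReal_norm]
    _ ≤ ∑ i, ‖iteratedFDeriv ℝ j (L i ∘ fun y => fderiv ℝ w y (EuclideanSpace.single i 1)) x‖ₑ := by
        conv_lhs =>
          rw [hdecomp, iteratedFDeriv_sum fun i _ => (L i).contDiff.comp (hw' i), Finset.sum_apply]
        exact enorm_sum_le _ _
    _ ≤ _ := by
        refine Finset.sum_le_sum fun i _ => ?_
        rw [← ofReal_norm, ← ofReal_norm]
        exact ENNReal.ofReal_le_ofReal (((L i).norm_iteratedFDeriv_comp_left (hw' i).contDiffAt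
          le_rfl).trans (mul_le_of_le_one_left (norm_nonneg _) (hL i)))

theorem enorm_iteratedFDeriv_le_of_forall_listDeriv {w : Euc n → ℝ}
    (hw : ContDiff ℝ (⊤ : ℕ∞) w) {x : Euc n} {B : ℝ≥0∞} {j : ℕ}
    (h : ∀ l : List (Fin n), l.length = j → ‖listDeriv l w x‖ₑ ≤ B) :
    ‖iteratedFDeriv ℝ j w x‖ₑ ≤ (n : ℝ≥0∞) ^ j * B := by
  induction j generalizing w with
  | zero =>
    rw [← ofReal_norm, norm_iteratedFDeriv_zero, ofReal_norm, pow_zero, one_mul]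
    exact h [] rfl
  | succ j ih =>
    have hpartial (i : Fin n) : ‖iteratedFDeriv ℝ j (listDeriv [i] w) x‖ₑ ≤ (n : ℝ≥0∞) ^ j * B :=
      ih (contDiff_listDeriv hw [i]) fun l hl => by
        rw [← listDeriv_append]
        exact h (l ++ [i]) (by simp [hl])
    calc ‖iteratedFDeriv ℝ (j + 1) w x‖ₑ
        ≤ ∑ i, ‖iteratedFDeriv ℝ j (listDeriv [i] w) x‖ₑ :=
          enorm_iteratedFDeriv_succ_le_sum (hw.of_le (by exact_mod_cast le_top)) x
      _ ≤ ∑ _i : Fin n, (n : ℝ≥0∞) ^ j * B := Finset.sum_le_sum fun i _ => hpartial i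
      _ = (n : ℝ≥0∞) ^ (j + 1) * B := by
          rw [Finset.sum_const, Finset.card_univ, Fintype.card_fin, nsmul_eq_mul, pow_succ]
          ring

end ListDeriv

section WeakDerivative

variable {n k : ℕ} {U : Set (Euc n)} {u ψ : Euc n → ℝ}

theorem listDeriv_convolution (hψ : ContDiff ℝ (⊤ : ℕ∞) ψ) (hc : HasCompactSupport ψ)
    (hu : LocallyIntegrable u) (l : List (Fin n)) :
    listDeriv l (convolution ψ u (ContinuousLinearMap.lsmul ℝ ℝ)) =
      convolution (listDeriv l ψ) u (ContinuousLinearMap.lsmul ℝ ℝ) := by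
  induction l with
  | nil => rfl
  | cons i l ih =>
    have hl : ContDiff ℝ 1 (listDeriv l ψ) :=
      (contDiff_listDeriv hψ l).of_le (by exact_mod_cast le_top)
    have hlc := hasCompactSupport_listDeriv hc l
    ext x
    have hint : ConvolutionExistsAt (fderiv ℝ (listDeriv l ψ)) u x
        ((ContinuousLinearMap.lsmul ℝ ℝ).precompL (Euc n)) volume :=
      (hlc.fderiv ℝ).convolutionExists_left _ (hl.continuous_fderiv one_ne_zero) hu x
    simp only [listDeriv, ih]
    rw [(hlc.hasFDerivAt_convolution_left _ hl hu x).fderiv, convolution_def,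
      ContinuousLinearMap.integral_apply hint.integrable, convolution_def]
    simp only [ContinuousLinearMap.precompL_apply]

theorem IsWeakDerivOn.listDeriv_convolution_indicator {g : Euc n → ℝ} {l : List (Fin n)}
    (hg : IsWeakDerivOn U (fun i => l.count i) u g) (hU : MeasurableSet U)
    (hu : IntegrableOn u U) (hψ : ContDiff ℝ (⊤ : ℕ∞) ψ) (hc : HasCompactSupport ψ) {x : Euc n}
    (hx : ∀ y, x - y ∈ tsupport ψ → y ∈ U) :
    listDeriv l (convolution ψ (U.indicator u) (ContinuousLinearMap.lsmul ℝ ℝ)) x =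
      convolution ψ (U.indicator g) (ContinuousLinearMap.lsmul ℝ ℝ) volume x := by
  have hreflect : ContDiff ℝ (⊤ : ℕ∞) fun y => ψ (x - y) := hψ.comp (by fun_prop)
  have hswap (f ψ : Euc n → ℝ) :
      convolution ψ (U.indicator f) (ContinuousLinearMap.lsmul ℝ ℝ) volume x =
        ∫ y in U, f y * ψ (x - y) := by
    rw [convolution_eq_swap, ← integral_indicator hU]
    refine integral_congr_ae (Eventually.of_forall fun y => ?_)
    by_cases hy : y ∈ U <;> simp [hy, mul_comm]
  have hparts := hg _ hreflect (hc.comp_homeomorph (Homeomorph.subLeft x))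
    ((tsupport_comp_subset_preimage ψ (by fun_prop)).trans hx)
  rw [← listDeriv_eq_mderiv_count hreflect, listDeriv_comp_sub_left hψ, mdeg_count] at hparts
  simp only [mul_left_comm (u _)] at hparts
  rw [integral_const_mul] at hparts
  rw [listDeriv_convolution hψ hc (hu.integrable_indicator hU).locallyIntegrable, hswap, hswap]
  exact mul_left_cancel₀ (pow_ne_zero _ (by norm_num)) hparts

/-- The weak partial derivatives of `u` of order at most `k` exist on `U` and are all bounded
there by `h`: the only way in which membership in a Sobolev space enters the estimates. -/
def HasWeakDerivMajorantOn (k : ℕ) (U : Set (Euc n)) (u : Euc n → ℝ) (h : Euc n → ℝ≥0∞) :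
    Prop :=
  ∀ α : Fin n → ℕ, mdeg α ≤ k →
    ∃ g, IsWeakDerivOn U α u g ∧ ∀ᵐ y ∂volume.restrict U, ‖g y‖ₑ ≤ h y

theorem HasWeakDerivMajorantOn.enorm_iteratedFDeriv_convolution_le {h : Euc n → ℝ≥0∞}
    (huh : HasWeakDerivMajorantOn k U u h) (hU : MeasurableSet U) (hu : IntegrableOn u U)
    (hψ : ContDiff ℝ (⊤ : ℕ∞) ψ) (hc : HasCompactSupport ψ) {x : Euc n}
    (hx : ∀ y, x - y ∈ tsupport ψ → y ∈ U) {j : ℕ} (hj : j ≤ k) :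
    ‖iteratedFDeriv ℝ j (convolution ψ (U.indicator u) (ContinuousLinearMap.lsmul ℝ ℝ)) x‖ₑ ≤
      (n : ℝ≥0∞) ^ j * (h ⋆ₗ[volume] fun z => ‖ψ z‖ₑ) x := by
  refine enorm_iteratedFDeriv_le_of_forall_listDeriv (hc.contDiff_convolution_left _ hψ
    (hu.integrable_indicator hU).locallyIntegrable) fun l hl => ?_
  obtain ⟨g, hg, hgh⟩ := huh (fun i => l.count i) (by rwa [mdeg_count, hl])
  rw [hg.listDeriv_convolution_indicator hU hu hψ hc hx]
  refine enorm_convolution_lsmul_le ?_ x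
  filter_upwards [(ae_restrict_iff' hU).1 hgh] with y hy
  by_cases hyU : y ∈ U
  · simpa [hyU] using hy hyU
  · simp [hyU]

end WeakDerivative

section LocalEstimate

theorem exists_enorm_sub_le_rieszPotential {E F : Type*} [NormedAddCommGroup E]
    [NormedSpace ℝ E] [FiniteDimensional ℝ E] [Nontrivial E] [HasContDiffBump E]
    [MeasurableSpace E] [BorelSpace E] (μ : Measure E) [μ.IsAddHaarMeasure]
    [NormedAddCommGroup F] [NormedSpace ℝ F] {m : ℕ} (hm : m + 1 < Module.finrank ℝ E) (c : E)
    {r R : ℝ} (hr : 0 < r) (hrR : r < R) :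
    ∃ M : ℝ≥0, ∀ {w : E → F} {H : E → ℝ≥0∞}, ContDiff ℝ (m + 2) w → Measurable H →
      (∀ x ∈ closedBall c R, ∀ j ≤ m + 2, ‖iteratedFDeriv ℝ j w x‖ₑ ≤ H x) →
      ∀ x ∈ ball c r, ∀ y ∈ ball c r, ‖w x - w y‖ₑ ≤
        M * (‖x - y‖ₑ * (rieszPotential μ (m + 1) H x + rieszPotential μ (m + 1) H y)) := by
  let χ : ContDiffBump c := ⟨r, R, hr, hrR⟩
  obtain ⟨A, hA⟩ := exists_enorm_fderiv_smul_le_rieszPotential (F := F) (μ := μ) (m := m)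
    (χ := χ) χ.contDiff χ.hasCompactSupport
  obtain ⟨C, hC, hA1⟩ := exists_isA1Weight_rieszPotential (E := E) (μ := μ)
    (a := (m : ℝ) + 1) (by positivity) (by exact_mod_cast hm)
  lift C to ℝ≥0 using hC
  refine ⟨2 ^ Module.finrank ℝ E * C * A, fun {w H} hw hH hwH x hx y hy => ?_⟩
  have hgrad (z : E) : ‖fderiv ℝ (fun y => χ y • w y) z‖ₑ ≤ A * rieszPotential μ (m + 1) H z :=
    hA hw hH (fun x hx => hwH x (by rwa [χ.tsupport_eq] at hx)) z
  have hsmul : ContDiff ℝ (m + 2) fun y => χ y • w y := χ.contDiff.smul hw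
  have hχ {z : E} (hz : z ∈ ball c r) : χ z = 1 :=
    χ.one_of_mem_closedBall (ball_subset_closedBall hz)
  have hdiff := ((hA1 H hH).const_mul A).enorm_sub_le (hsmul.of_le (by norm_cast; omega)) hgrad x y
  rw [hχ hx, hχ hy, one_smul, one_smul] at hdiff
  refine hdiff.trans_eq ?_
  push_cast
  ring

variable {n m : ℕ}

theorem HasWeakDerivMajorantOn.enorm_iteratedFDeriv_convolution_normed_le {k j : ℕ}
    {U : Set (Euc n)} {u : Euc n → ℝ} {h : Euc n → ℝ≥0∞} (huh : HasWeakDerivMajorantOn k U u h)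
    (hU : MeasurableSet U) (hu : IntegrableOn u U) (b : ContDiffBump (0 : Euc n)) {x : Euc n}
    (hx : closedBall x b.rOut ⊆ U) (hj : j ≤ k) :
    ‖iteratedFDeriv ℝ j (convolution (b.normed volume) (U.indicator u)
        (ContinuousLinearMap.lsmul ℝ ℝ)) x‖ₑ ≤
      (n : ℝ≥0∞) ^ j * (h ⋆ₗ[volume] fun z => ‖b.normed volume z‖ₑ) x := by
  refine huh.enorm_iteratedFDeriv_convolution_le hU hu b.contDiff_normed
    b.hasCompactSupport_normed (fun y hy => hx ?_) hj
  rwa [b.tsupport_normed_eq, mem_closedBall_zero_iff, ← dist_eq_norm, dist_comm] at hy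

theorem HasWeakDerivMajorantOn.exists_enorm_convolution_sub_le (hmn : m + 1 < n) (c : Euc n)
    {ρ : ℝ} (hρ : 0 < ρ) :
    ∃ M : ℝ≥0, ∀ {u : Euc n → ℝ} {h : Euc n → ℝ≥0∞},
      HasWeakDerivMajorantOn (m + 2) (ball c (3 * ρ)) u h → IntegrableOn u (ball c (3 * ρ)) →
      Measurable h → ∀ b : ContDiffBump (0 : Euc n), b.rOut ≤ 2 * b.rIn → b.rOut < ρ →
      let w := convolution (b.normed volume) ((ball c (3 * ρ)).indicator u)
        (ContinuousLinearMap.lsmul ℝ ℝ)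
      ∀ x ∈ ball c ρ, ∀ y ∈ ball c ρ, ‖w x - w y‖ₑ ≤ M * (‖x - y‖ₑ *
        (rieszPotential volume (m + 1) h x + rieszPotential volume (m + 1) h y)) := by
  have : NeZero n := ⟨by omega⟩
  have hfinrank : Module.finrank ℝ (Euc n) = n := finrank_euclideanSpace_fin
  obtain ⟨A, hA⟩ := exists_enorm_sub_le_rieszPotential (F := ℝ) (volume : Measure (Euc n))
    (hmn.trans_eq hfinrank.symm) c hρ (show ρ < 2 * ρ by linarith)
  obtain ⟨C, hC, hA1⟩ := exists_isA1Weight_rieszPotential (E := Euc n) (μ := volume)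
    (a := (m : ℝ) + 1) (by positivity) (by rw [hfinrank]; exact_mod_cast hmn)
  lift C to ℝ≥0 using hC
  refine ⟨A * n ^ (m + 2) * (2 ^ n * C), fun {u h} huh hu hh b hb hbρ => ?_⟩
  intro w x hx y hy
  let ψ := b.normed volume
  have hψm : Measurable fun z => ‖ψ z‖ₑ := b.continuous_normed.measurable.enorm
  let hψ := h ⋆ₗ[volume] fun z => ‖ψ z‖ₑ
  have hhψ : Measurable hψ := measurable_lconvolution _ hh hψm
  have hwH (x : Euc n) (hx : x ∈ closedBall c (2 * ρ)) (j : ℕ) (hj : j ≤ m + 2) :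
      ‖iteratedFDeriv ℝ j w x‖ₑ ≤ (n : ℝ≥0∞) ^ (m + 2) * hψ x := by
    have hxU : closedBall x b.rOut ⊆ ball c (3 * ρ) :=
      closedBall_subset_ball' (by linarith [mem_closedBall.1 hx])
    refine (huh.enorm_iteratedFDeriv_convolution_normed_le measurableSet_ball hu b hxU hj).trans ?_
    gcongr
    exact_mod_cast NeZero.one_le
  have hpot (x : Euc n) : rieszPotential volume (m + 1) (fun y => (n : ℝ≥0∞) ^ (m + 2) * hψ y) x ≤
      n ^ (m + 2) * (2 ^ n * C * rieszPotential volume (m + 1) h x) := by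
    rw [rieszPotential_const_mul hhψ]
    gcongr
    simpa [hfinrank] using
      (hA1 h hh).rieszPotential_lconvolution_le hh hψm (enorm_contDiffBump_normed_le b hb) x
  have hw : ContDiff ℝ (m + 2) w := b.hasCompactSupport_normed.contDiff_convolution_left _
    (n := (m + 2 : ℕ)) b.contDiff_normed
    (hu.integrable_indicator measurableSet_ball).locallyIntegrable
  refine (hA hw (hhψ.const_mul _) hwH x hx y hy).trans
    ((mul_le_mul' le_rfl (mul_le_mul' le_rfl (add_le_add (hpot x) (hpot y)))).trans_eq ?_)
  push_cast
  ring

theorem HasWeakDerivMajorantOn.exists_isHajlaszGradientOn (hmn : m + 1 < n) (c : Euc n) {ρ : ℝ}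
    (hρ : 0 < ρ) :
    ∃ M : ℝ≥0, ∀ {u : Euc n → ℝ} {h : Euc n → ℝ≥0∞},
      HasWeakDerivMajorantOn (m + 2) (ball c (3 * ρ)) u h → IntegrableOn u (ball c (3 * ρ)) →
      Measurable h → IsHajlaszGradientOn volume u
        (fun x => M * rieszPotential volume (m + 1) h x) (ball c ρ) := by
  obtain ⟨M, hM⟩ := exists_enorm_convolution_sub_le hmn c hρ
  refine ⟨M, fun {u h} huh hu hh => ?_⟩
  let b (i : ℕ) : ContDiffBump (0 : Euc n) :=
    ⟨ρ / (i + 2) / 2, ρ / (i + 2), by positivity, half_lt_self (by positivity)⟩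
  have hb (i : ℕ) : (b i).rOut ≤ 2 * (b i).rIn := (mul_div_cancel₀ _ two_ne_zero).ge
  have hbρ (i : ℕ) : (b i).rOut < ρ := div_lt_self hρ (by linarith [i.cast_nonneg (α := ℝ)])
  have hb0 : Tendsto (fun i => (b i).rOut) atTop (𝓝 0) := tendsto_const_nhds.div_atTop
    (tendsto_atTop_add_const_right _ _ tendsto_natCast_atTop_atTop)
  have hlim : ∀ᵐ x ∂volume.restrict (ball c ρ), Tendsto (fun i => convolution ((b i).normed volume)
      ((ball c (3 * ρ)).indicator u) (ContinuousLinearMap.lsmul ℝ ℝ) volume x) atTop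
      (𝓝 (u x)) := by
    filter_upwards [ae_restrict_of_ae
      (ContDiffBump.ae_convolution_tendsto_right_of_locallyIntegrable hb0
        (Eventually.of_forall hb) (hu.integrable_indicator measurableSet_ball).locallyIntegrable),
      ae_restrict_mem measurableSet_ball] with x hx hxρ
    rwa [indicator_of_mem (ball_subset_ball (by linarith) hxρ)] at hx
  filter_upwards [hlim, ae_restrict_mem measurableSet_ball] with x hx hxρ
  filter_upwards [hlim, ae_restrict_mem measurableSet_ball] with y hy hyρ
  refine (le_of_tendsto (hx.sub hy).enorm (Eventually.of_forall fun i =>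
    hM huh hu hh (b i) (hb i) (hbρ i) x hxρ y hyρ)).trans_eq ?_
  ring

theorem isHajlaszGradientOn_of_forall_apply {E ι : Type*} [NormedAddCommGroup E]
    [MeasurableSpace E] [Fintype ι] {μ : Measure E} {φ : E → EuclideanSpace ℝ ι} {G : E → ℝ≥0∞}
    {B : Set E} (hφ : ∀ i, IsHajlaszGradientOn μ (fun x => φ x i) G B) :
    IsHajlaszGradientOn μ φ (fun x => Fintype.card ι * G x) B := by
  classical
  have hnorm (v : EuclideanSpace ℝ ι) : ‖v‖ₑ ≤ ∑ i, ‖v i‖ₑ := by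
    conv_lhs => rw [← (EuclideanSpace.basisFun ι ℝ).sum_repr v]
    exact (enorm_sum_le _ _).trans_eq (by simp [← ofReal_norm, norm_smul])
  filter_upwards [ae_all_iff.2 hφ] with x hx
  filter_upwards [ae_all_iff.2 hx] with y hy
  calc ‖φ x - φ y‖ₑ ≤ ∑ i, ‖φ x i - φ y i‖ₑ := hnorm _
    _ ≤ ∑ _i : ι, ‖x - y‖ₑ * (G x + G y) := Finset.sum_le_sum fun i _ => hy i
    _ = _ := by
        rw [Finset.sum_const, Finset.card_univ, nsmul_eq_mul]
        ring

end LocalEstimate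

section SobolevAreaFormula

theorem exists_measurable_memLp_forall_enorm_le {X F ι : Type*} [MeasurableSpace X]
    {μ : Measure X} [NormedAddCommGroup F] [Finite ι] {q : ℝ≥0∞} {g : ι → X → F}
    (hg : ∀ i, MemLp (g i) q μ) :
    ∃ s : X → ℝ, Measurable s ∧ MemLp s q μ ∧ ∀ i, ∀ᵐ x ∂μ, ‖g i x‖ₑ ≤ ‖s x‖ₑ := by
  have := Fintype.ofFinite ι
  refine ⟨fun x => ∑ i, ‖(hg i).1.mk _ x‖, Finset.measurable_fun_sum _ fun i _ =>
    (hg i).1.stronglyMeasurable_mk.norm.measurable, memLp_finsetSum _ fun i _ =>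
    ((memLp_congr_ae (hg i).1.ae_eq_mk).1 (hg i)).norm, fun i => ?_⟩
  filter_upwards [(hg i).1.ae_eq_mk] with x hx
  rw [hx, enorm_le_iff_norm_le, Real.norm_of_nonneg (Finset.sum_nonneg fun _ _ => norm_nonneg _)]
  exact Finset.single_le_sum (f := fun i => ‖(hg i).1.mk _ x‖) (fun _ _ => norm_nonneg _)
    (Finset.mem_univ i)

theorem finite_setOf_mdeg_le {n : ℕ} (k : ℕ) : {α : Fin n → ℕ | mdeg α ≤ k}.Finite :=
  (finite_Iic fun _ => k).subset fun _α hα i =>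
    (Finset.single_le_sum (fun _ _ => zero_le) (Finset.mem_univ i)).trans hα

theorem exists_hasWeakDerivMajorantOn {ι : Type*} [Finite ι] {n k : ℕ} {p : ℝ} (hp : 1 ≤ p)
    {U : Set (Euc n)} (hU : MeasurableSet U) (hUfin : volume U ≠ ∞) {v : ι → Euc n → ℝ}
    (hv : ∀ i, MemSobolevOn k p U (v i)) :
    ∃ h : Euc n → ℝ≥0∞, Measurable h ∧ ∫⁻ y, h y ≠ ∞ ∧ ∫⁻ y, h y ^ p ≠ ∞ ∧
      ∀ i, HasWeakDerivMajorantOn k U (v i) h := by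
  have hp0 : 0 < p := by linarith
  have : IsFiniteMeasure (volume.restrict U) := ⟨by simpa using hUfin.lt_top⟩
  have : Finite {α : Fin n → ℕ // mdeg α ≤ k} := finite_setOf_mdeg_le k
  choose g hg hgv using fun (j : ι × {α : Fin n → ℕ // mdeg α ≤ k}) =>
    (hv j.1).2 j.2 j.2.2
  obtain ⟨s, hs, hsp, hgs⟩ := exists_measurable_memLp_forall_enorm_le hg
  have hsint : IntegrableOn s U := hsp.integrable (by simpa using hp)
  have hspint := lintegral_rpow_enorm_lt_top_of_eLpNorm_lt_top (by simpa using hp0)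
    ENNReal.ofReal_ne_top ((memLp_indicator_iff_restrict hU).2 hsp).2
  rw [ENNReal.toReal_ofReal hp0.le] at hspint
  refine ⟨fun y => ‖U.indicator s y‖ₑ, (hs.indicator hU).enorm,
    (hsint.integrable_indicator hU).2.ne, hspint.ne,
    fun i α hα => ⟨g (i, ⟨α, hα⟩), hgv (i, ⟨α, hα⟩), ?_⟩⟩
  filter_upwards [hgs (i, ⟨α, hα⟩), ae_restrict_mem hU] with y hy hyU
  rwa [indicator_of_mem hyU]

theorem exists_countable_ball_cover_closedBall_mul_subset {X : Type*} [PseudoMetricSpace X]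
    [SecondCountableTopology X] {U : Set X} (hU : IsOpen U) {K : ℝ} (hK : 0 < K) :
    ∃ t ⊆ U, t.Countable ∧ ∃ ρ : X → ℝ, (∀ c ∈ t, 0 < ρ c ∧ closedBall c (K * ρ c) ⊆ U) ∧
      U ⊆ ⋃ c ∈ t, ball c (ρ c) := by
  have hρ (x : X) (hx : x ∈ U) : ∃ ρ : ℝ, 0 < ρ ∧ closedBall x (K * ρ) ⊆ U := by
    obtain ⟨r, hr, hrU⟩ := Metric.nhds_basis_closedBall.mem_iff.1 (hU.mem_nhds hx)
    exact ⟨r / K, by positivity, by rwa [mul_div_cancel₀ _ hK.ne']⟩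
  choose! ρ hρ using hρ
  obtain ⟨t, htU, ht, hcover⟩ := TopologicalSpace.countable_cover_nhdsWithin
    (s := U) (f := fun x => ball x (ρ x))
    (fun x hx => mem_nhdsWithin_of_mem_nhds (ball_mem_nhds x (hρ x hx).1))
  exact ⟨t, htU, ht, ρ, fun c hc => hρ c (htU hc), hcover⟩

variable {n : ℕ} {p : ℝ} {Ω : Set (Euc n)}

theorem exists_forall_lipschitzOnWith_preciseRepV {m d : ℕ} (hp : 1 ≤ p) (hmn : m + 1 < n)
    {φ : Euc n → Euc d} {c : Euc n} {ρ : ℝ} (hρ : 0 < ρ)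
    (hφ : ∀ i, MemSobolevOn (m + 2) p (ball c (3 * ρ)) fun x => φ x i) :
    ∃ h : Euc n → ℝ≥0∞, Measurable h ∧ ∫⁻ y, h y ≠ ∞ ∧ ∫⁻ y, h y ^ p ≠ ∞ ∧
      ∀ N : ℝ≥0, ∃ K, LipschitzOnWith K (preciseRepV φ)
        (ball c ρ ∩ {x | rieszPotential volume (m + 1) h x ≤ N}) := by
  have : NeZero n := ⟨by omega⟩
  have : IsFiniteMeasure (volume.restrict (ball c (3 * ρ))) := ⟨by simpa using measure_ball_lt_top⟩
  obtain ⟨h, hh, hint, hpint, hφh⟩ :=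
    exists_hasWeakDerivMajorantOn hp measurableSet_ball measure_ball_lt_top.ne hφ
  refine ⟨h, hh, hint, hpint, fun N => ?_⟩
  have hφint (i : Fin d) : IntegrableOn (fun x => φ x i) (ball c (3 * ρ)) :=
    (hφ i).1.integrable (by simpa using hp)
  have hφball : IntegrableOn φ (ball c (3 * ρ)) := Integrable.of_eval_piLp hφint
  obtain ⟨M, hM⟩ := HasWeakDerivMajorantOn.exists_isHajlaszGradientOn hmn c hρ
  obtain ⟨C, hC, hA1⟩ := exists_isA1Weight_rieszPotential (E := Euc n) (μ := volume)
    (a := (m : ℝ) + 1) (by positivity) (by rw [finrank_euclideanSpace_fin]; exact_mod_cast hmn)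
  have hgrad := isHajlaszGradientOn_of_forall_apply fun i => hM (hφh i) (hφint i) hh
  obtain ⟨K, hK⟩ := hgrad.exists_lipschitzOnWith_preciseRepV
    (hφball.mono_set (ball_subset_ball (by linarith))) (((hA1 h hh).const_mul M).const_mul _) hC
    isOpen_ball (d * (M * N))
  refine ⟨K, hK.mono (inter_subset_inter_right _ fun x hx => ?_)⟩
  simp only [mem_ofPred_eq, Fintype.card_fin] at hx ⊢
  push_cast
  gcongr

theorem exists_iUnion_lipschitzOnWith_preciseRepV {m d : ℕ} (hp : 1 ≤ p) (hmn : m + 1 < n)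
    (hΩ : IsOpen Ω) {φ : Euc n → Euc d} (hφ : ∀ i, MemSobolevLoc (m + 2) p Ω fun x => φ x i) :
    ∃ (ι : Type) (_ : Countable ι) (s : ι → Set (Euc n)), (∀ i, MeasurableSet (s i)) ∧
      (∀ i, ∃ K, LipschitzOnWith K (preciseRepV φ) (s i)) ∧ ⋃ i, s i ⊆ Ω ∧
      volume (Ω \ ⋃ i, s i) = 0 ∧ rieszCap ((m : ℝ) + 1) p (Ω \ ⋃ i, s i) = 0 := by
  have : NeZero n := ⟨by omega⟩
  obtain ⟨t, -, ht, ρ, hρ, hcover⟩ :=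
    exists_countable_ball_cover_closedBall_mul_subset hΩ three_pos
  have := ht.to_subtype
  have hball (c : t) : ball (c : Euc n) (ρ c) ⊆ closedBall c (3 * ρ c) :=
    ball_subset_closedBall.trans (closedBall_subset_closedBall (by linarith [(hρ c c.2).1]))
  choose h hh hint hpint hlip using fun c : t =>
    exists_forall_lipschitzOnWith_preciseRepV hp hmn (hρ c c.2).1 fun i => hφ i _ isOpen_ball
      isBounded_ball (closure_ball_subset_closedBall.trans (hρ c c.2).2)
  let s (i : t × ℕ) :=
    ball (i.1 : Euc n) (ρ i.1) ∩ {x | rieszPotential volume (m + 1) (h i.1) x ≤ i.2}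
  have hS (x : Euc n) (hx : x ∈ Ω \ ⋃ i, s i) : ∃ c, rieszPotential volume (m + 1) (h c) x = ⊤ := by
    obtain ⟨c, hc, hxc⟩ := mem_iUnion₂.1 (hcover hx.1)
    refine ⟨⟨c, hc⟩, of_not_not fun hne => hx.2 ?_⟩
    obtain ⟨N, hN⟩ := ENNReal.exists_nat_gt hne
    exact mem_iUnion.2 ⟨(⟨c, hc⟩, N), hxc, hN.le⟩
  refine ⟨t × ℕ, inferInstance, s, fun i => measurableSet_ball.inter
    (measurableSet_le (measurable_rieszPotential (hh i.1)) measurable_const),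
    fun i => by simpa using hlip i.1 i.2, iUnion_subset fun i =>
    inter_subset_left.trans ((hball i.1).trans (hρ _ i.1.2).2), ?_,
    rieszCap_eq_zero_of_forall_exists_rieszPotential_eq_top (by omega) (by linarith) hh hpint hS⟩
  have hfin : ∀ᵐ x, ∀ c, rieszPotential volume (m + 1) (h c) x < ⊤ := ae_all_iff.2 fun c =>
    ae_rieszPotential_lt_top (by positivity)
      (by rw [finrank_euclideanSpace_fin]; exact_mod_cast hmn.le) (hh c) (hint c)
  refine measure_mono_null (fun x hx => ?_) hfin
  obtain ⟨c, hc⟩ := hS x hx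
  exact fun hlt => (hlt c).ne hc

theorem area_formula_sobolev_general {k : ℕ} (hk : 1 < k) (hkn : k ≤ n) (hp : 1 ≤ p)
    (hΩ : IsOpen Ω) {φ : Euc n → Euc n} (hφ : ∀ i, MemSobolevLoc k p Ω fun x => φ x i) :
    ∃ S ⊆ Ω, rieszCap ((k : ℝ) - 1) p S = 0 ∧ volume S = 0 ∧
      ∃ Dφ : Euc n → (Euc n →L[ℝ] Euc n),
        (∀ᵐ x ∂volume.restrict (Ω \ S), HasApproxDerivAt (Ω \ S) (preciseRepV φ) (Dφ x) x) ∧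
        ∀ F : Euc n → ℝ≥0∞, AEMeasurable F (volume.restrict Ω) →
          ∫⁻ x in Ω, F x * ENNReal.ofReal |(Dφ x).det| =
            ∫⁻ y, ∑' x : ↥(preciseRepV φ ⁻¹' {y} ∩ (Ω \ S)), F x := by
  obtain ⟨m, rfl⟩ : ∃ m, k = m + 2 := Nat.exists_eq_add_of_le' hk
  obtain ⟨ι, _, s, hs, hlip, hsΩ, hnull, hcap⟩ :=
    exists_iUnion_lipschitzOnWith_preciseRepV hp (by omega) hΩ hφ
  obtain ⟨D, hD, hDF⟩ := exists_hasApproxDerivAt_and_areaFormulaOn hs hlip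
  have hm : ((m + 2 : ℕ) : ℝ) - 1 = m + 1 := by push_cast; ring
  have hsdiff : Ω \ (Ω \ ⋃ i, s i) = ⋃ i, s i := by
    rw [sdiff_sdiff_right_self, inter_eq_right.2 hsΩ]
  refine ⟨Ω \ ⋃ i, s i, sdiff_subset, hm ▸ hcap, hnull, D, ?_⟩
  rw [hsdiff]
  refine ⟨hD, fun F hF => ?_⟩
  rw [setLIntegral_congr (hsΩ.eventuallyLE.antisymm (ae_le_set.2 hnull)).symm]
  exact (hDF F (hF.mono_set hsΩ)).2.symm

end SobolevAreaFormula

/-- Theorem 1.2, the area formula for `W^{k,p}_loc` mappings. -/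
theorem area_formula_sobolev {n k : ℕ} {p : ℝ}
    (hk : 1 < k) (hp : 1 ≤ p) (hkpn : ((k : ℝ) - 1) * p < n)
    (Ω : Set (Euc n)) (hΩ : IsOpen Ω)
    (φ : Euc n → Euc n)
    (hφ : ∀ i : Fin n, MemSobolevLoc k p Ω (fun x => (WithLp.equiv 2 (Fin n → ℝ)) (φ x) i)) :
    ∃ S ⊆ Ω, rieszCap ((k : ℝ) - 1) p S = 0 ∧
      ∃ Dφ : Euc n → (Euc n →L[ℝ] Euc n),
        (∀ᵐ x ∂(volume.restrict (Ω \ S)),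
          HasApproxDerivAt (Ω \ S) (preciseRepV φ) (Dφ x) x) ∧
        ∀ f : Euc n → ℝ, Measurable (Ω.restrict f) → (∀ x ∈ Ω, 0 ≤ f x) →
          ∫⁻ x in Ω, ENNReal.ofReal (f x) * ENNReal.ofReal |(Dφ x).det| =
            ∫⁻ y, ∑' x : ↥(preciseRepV φ ⁻¹' {y} ∩ (Ω \ S)), ENNReal.ofReal (f ↑x) := by
  have hkn : (k : ℝ) - 1 < n := (le_mul_of_one_le_right
    (sub_nonneg.2 (by exact_mod_cast hk.le)) hp).trans_lt hkpn
  obtain ⟨S, hSΩ, hcap, -, D, hD, hDF⟩ := area_formula_sobolev_general hk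
    (Nat.lt_succ_iff.1 (by exact_mod_cast sub_lt_iff_lt_add.1 hkn)) hp hΩ hφ
  refine ⟨S, hSΩ, hcap, D, hD, fun f hf _ => hDF _ ?_⟩
  exact (aemeasurable_restrict_of_measurable_subtype hΩ.measurableSet hf).ennreal_ofReal
end

section
/- Let k ∈ ℕ, 1 ≤ p < ∞, and f ∈ W^{k,p}(ℝⁿ) (in particular f ∈ W^{1,p}(ℝⁿ)). Then there exists a non-decreasing sequence of closed sets A₁ ⊂ A₂ ⊂ ⋯ ⊂ ℝⁿ such that for each j the precise representative f* is Lipschitz continuous on A_j outside a set of Lebesgue measure zero, and the complement satisfies |ℝⁿ \ ⋃_{j=1}^∞ A_j| = 0, where |·| denotes Lebesgue measure. (One may take A_j := { x : M|∇f|(x) ≤ α_j } for any sequence α_j → ∞.) -/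
open MeasureTheory Filter Metric Set
open scoped ENNReal NNReal Topology

/-- `g` is the weak gradient of `f`. -/
def IsWeakGradient {n : ℕ} (f : Euc n → ℝ) (g : Euc n → Euc n) : Prop :=
  ∀ i : Fin n, IsWeakDeriv (Pi.single i 1) f
    (fun x => (inner ℝ (g x) (EuclideanSpace.single i 1) : ℝ))

/-!
For a `C¹` function `u`, averaging the fundamental theorem of calculus along the segments from `x`
to the points of a ball gives `⨍ |u - u(x)| ≤ r M|∇u|(x)` on `B(x, r)`, and comparing the averages
over `B(x, |x - y|) ⊆ B(y, 2|x - y|)` yields `|u(x) - u(y)| ≤ C |x - y| (M|∇u|(x) + M|∇u|(y))`.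
If `∇f = g` weakly, then the mollifications of `f` have the mollifications of `g` as gradients,
these are dominated by ball averages of `|g|`, and the maximal function of such averages is at most
`C M|g|`. Letting the mollification parameter tend to zero, the inequality holds for `f*` off a null
set, so `f*` is Lipschitz on the closed sets `{M|g| ≤ j}`, which exhaust `ℝⁿ` because `M|g| < ∞`
almost everywhere. That finiteness needs no weak-type estimate: averages of `|g|` over small balls
are bounded at Lebesgue points, those over large balls by Hölder's inequality.
-/

open ContinuousLinearMap (lsmul)
open scoped Convolution

section Metric

variable {X : Type*} [PseudoMetricSpace X] [MeasurableSpace X] (μ : Measure X)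

/-- The centred Hardy–Littlewood maximal function of `γ` with respect to a measure `μ` on a metric
space; on `ℝⁿ` with Lebesgue measure it is `maxFn`. -/
noncomputable def maximalFunction (γ : X → ℝ≥0∞) (x : X) : ℝ≥0∞ :=
  ⨆ (r : ℝ) (_ : 0 < r), ⨍⁻ y in ball x r, γ y ∂μ

lemma maxFn_eq_maximalFunction {n : ℕ} (γ : Euc n → ℝ≥0∞) :
    maxFn γ = maximalFunction volume γ := by
  funext x
  simp only [maxFn, maximalFunction, setLAverage_eq, ENNReal.div_eq_inv_mul]

lemma laverage_ball_le_maximalFunction (γ : X → ℝ≥0∞) (x : X) {r : ℝ} (hr : 0 < r) :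
    ⨍⁻ y in ball x r, γ y ∂μ ≤ maximalFunction μ γ x :=
  le_iSup₂_of_le r hr le_rfl

variable {μ}

lemma maximalFunction_mono {γ δ : X → ℝ≥0∞} (h : γ ≤ δ) :
    maximalFunction μ γ ≤ maximalFunction μ δ :=
  fun _ ↦ iSup₂_mono fun _ _ ↦ laverage_mono_ae (.of_forall h)

lemma maximalFunction_const_mul {c : ℝ≥0∞} (hc : c ≠ ∞) (γ : X → ℝ≥0∞) (x : X) :
    maximalFunction μ (fun y ↦ c * γ y) x = c * maximalFunction μ γ x := by
  simp only [maximalFunction, setLAverage_eq', lintegral_const_mul' c _ hc, ENNReal.mul_iSup]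

lemma lowerSemicontinuous_measure_ball (r : ℝ) : LowerSemicontinuous fun x ↦ μ (ball x r) := by
  intro x a ha
  have hunion : ball x r = ⋃ s : Iio r, ball x s := by
    ext y
    simpa using ⟨fun h ↦ (exists_between h).imp fun _ ⟨hys, hs⟩ ↦ ⟨hs, hys⟩,
      fun ⟨_, hs, hys⟩ ↦ hys.trans hs⟩
  have hmono : Monotone fun s : Iio r ↦ ball x (s : ℝ) := fun s t hst ↦ ball_subset_ball hst
  obtain ⟨⟨s, hs⟩, has⟩ : ∃ s : Iio r, a < μ (ball x s) := by
    rwa [← lt_iSup_iff, ← hmono.measure_iUnion, ← hunion]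
  filter_upwards [ball_mem_nhds x (sub_pos.2 hs)] with y hy
  refine has.trans_le (measure_mono (ball_subset_ball' ?_))
  rw [mem_ball'] at hy
  linarith

lemma setLIntegral_ball_setLIntegral_ball [OpensMeasurableSpace X] [SecondCountableTopology X]
    [SFinite μ] {γ : X → ℝ≥0∞} (hγ : AEMeasurable γ μ) (x : X) (r R : ℝ) :
    ∫⁻ z in ball x r, ∫⁻ y in ball z R, γ y ∂μ ∂μ =
      ∫⁻ y, γ y * μ (ball y R ∩ ball x r) ∂μ := by
  have hmeas : MeasurableSet {q : X × X | dist q.2 q.1 < R} :=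
    measurableSet_lt (measurable_snd.dist measurable_fst) measurable_const
  calc ∫⁻ z in ball x r, ∫⁻ y in ball z R, γ y ∂μ ∂μ
      = ∫⁻ z in ball x r, ∫⁻ y,
          {q : X × X | dist q.2 q.1 < R}.indicator (fun q ↦ γ q.2) (z, y) ∂μ ∂μ := by
        simp_rw [← lintegral_indicator measurableSet_ball]
        rfl
    _ = ∫⁻ y, ∫⁻ z in ball x r,
          {q : X × X | dist q.2 q.1 < R}.indicator (fun q ↦ γ q.2) (z, y) ∂μ ∂μ :=
        lintegral_lintegral_swap ((hγ.comp_quasiMeasurePreserving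
          Measure.quasiMeasurePreserving_snd).indicator hmeas)
    _ = ∫⁻ y, ∫⁻ z in ball x r, (ball y R).indicator (fun _ ↦ γ y) z ∂μ ∂μ := by
        simp only [indicator, mem_ofPred_eq, mem_ball, dist_comm]
    _ = ∫⁻ y, γ y * μ (ball y R ∩ ball x r) ∂μ := by
        simp only [lintegral_indicator_const measurableSet_ball,
          Measure.restrict_apply measurableSet_ball]

end Metric

section Lp

variable {X F : Type*} [MeasurableSpace X] {μ : Measure X} [NormedAddCommGroup F]

lemma laverage_enorm_le_eLpNorm {p : ℝ≥0∞} (hp : 1 ≤ p) {g : X → F}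
    (hg : AEStronglyMeasurable g μ) {s : Set X} (hs₀ : μ s ≠ 0) (hs : μ s ≠ ∞) :
    ⨍⁻ y in s, ‖g y‖ₑ ∂μ ≤ (μ s)⁻¹ ^ (1 / p).toReal * eLpNorm g p μ := by
  have : IsProbabilityMeasure ((μ s)⁻¹ • μ.restrict s) := ⟨by simp [ENNReal.inv_mul_cancel hs₀ hs]⟩
  calc ⨍⁻ y in s, ‖g y‖ₑ ∂μ = eLpNorm g 1 ((μ s)⁻¹ • μ.restrict s) := by
        rw [setLAverage_eq', eLpNorm_one_eq_lintegral_enorm]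
    _ ≤ eLpNorm g p ((μ s)⁻¹ • μ.restrict s) :=
        eLpNorm_le_eLpNorm_of_exponent_le hp (hg.restrict.smul_measure _)
    _ = (μ s)⁻¹ ^ (1 / p).toReal * eLpNorm g p (μ.restrict s) := by
        rw [eLpNorm_smul_measure_of_ne_zero (ENNReal.inv_ne_zero.2 hs), smul_eq_mul]
    _ ≤ (μ s)⁻¹ ^ (1 / p).toReal * eLpNorm g p μ := by
        gcongr
        exact Measure.restrict_le_self

end Lp

section Haar

variable {E : Type*} [NormedAddCommGroup E] [MeasurableSpace E] [BorelSpace E] (μ : Measure E)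
  [μ.IsAddHaarMeasure]

lemma lowerSemicontinuous_maximalFunction (γ : E → ℝ≥0∞) :
    LowerSemicontinuous (maximalFunction μ γ) := by
  refine lowerSemicontinuous_biSup fun r hr ↦ ?_
  have havg (x : E) : ⨍⁻ y in ball x r, γ y ∂μ =
      (μ (ball 0 r))⁻¹ * μ.withDensity γ (ball x r) := by
    rw [setLAverage_eq, withDensity_apply _ measurableSet_ball, Measure.addHaar_ball_center μ x,
      ENNReal.div_eq_inv_mul]
  simp only [havg]
  exact (ENNReal.continuous_const_mul (ENNReal.inv_ne_top.2
    (measure_ball_pos μ 0 hr).ne')).comp_lowerSemicontinuous (lowerSemicontinuous_measure_ball r)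
    fun _ _ h ↦ mul_le_mul_right h _

variable [NormedSpace ℝ E] [FiniteDimensional ℝ E] {F : Type*} [NormedAddCommGroup F]

lemma addHaar_ball_two_mul (x y : E) (r : ℝ) :
    μ (ball x (2 * r)) = 2 ^ Module.finrank ℝ E * μ (ball y r) := by
  rw [Measure.addHaar_ball_mul_of_pos μ x two_pos, Measure.addHaar_ball_center μ y,
    ENNReal.ofReal_pow two_pos.le, ENNReal.ofReal_ofNat]

lemma ball_ae_eq_closedBall (x : E) {r : ℝ} (hr : r ≠ 0) : ball x r =ᵐ[μ] closedBall x r := by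
  rw [← ball_union_sphere]
  exact (union_ae_eq_left_of_ae_eq_empty
    (ae_eq_empty.2 (Measure.addHaar_sphere_of_ne_zero μ x hr))).symm

variable {μ}

lemma laverage_ball_le_of_subset (γ : E → ℝ≥0∞) {x y : E} {r : ℝ}
    (h : ball x r ⊆ ball y (2 * r)) :
    ⨍⁻ z in ball x r, γ z ∂μ ≤ 2 ^ Module.finrank ℝ E * ⨍⁻ z in ball y (2 * r), γ z ∂μ := by
  have h2 : (2 : ℝ≥0∞) ^ Module.finrank ℝ E ≠ 0 := by simp
  have h2' : (2 : ℝ≥0∞) ^ Module.finrank ℝ E ≠ ∞ := by simp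
  rw [setLAverage_eq, setLAverage_eq, addHaar_ball_two_mul μ y x, ← mul_div_assoc,
    ENNReal.mul_div_mul_left _ _ h2 h2']
  gcongr

lemma setLIntegral_ball_setLIntegral_ball_le {γ : E → ℝ≥0∞} (hγ : AEMeasurable γ μ) (x : E)
    {r : ℝ} (hr : 0 < r) (R : ℝ) :
    ∫⁻ z in ball x r, ∫⁻ y in ball z R, γ y ∂μ ∂μ ≤
      2 ^ Module.finrank ℝ E * maximalFunction μ γ x * (μ (ball 0 r) * μ (ball 0 R)) := by
  -- The intersection lies in the smaller ball, and is empty unless `y` is in a ball of twice the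
  -- larger radius around `x`.
  have hinter (y : E) : γ y * μ (ball y R ∩ ball x r) ≤
      (ball x (2 * max r R)).indicator (fun y ↦ γ y * μ (ball 0 (min r R))) y := by
    rcases (ball y R ∩ ball x r).eq_empty_or_nonempty with h | ⟨z, hzy, hzx⟩
    · simp [h]
    · have hy : y ∈ ball x (2 * max r R) := by
        rw [mem_ball] at *
        linarith [dist_triangle_left y x z, le_max_left r R, le_max_right r R]
      rw [indicator_of_mem hy]
      refine mul_le_mul_right ?_ _
      rcases min_choice r R with h | h <;> rw [h]
      · exact (measure_mono inter_subset_right).trans_eq (Measure.addHaar_ball_center μ x r)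
      · exact (measure_mono inter_subset_left).trans_eq (Measure.addHaar_ball_center μ y R)
  calc ∫⁻ z in ball x r, ∫⁻ y in ball z R, γ y ∂μ ∂μ
      = ∫⁻ y, γ y * μ (ball y R ∩ ball x r) ∂μ := setLIntegral_ball_setLIntegral_ball hγ x r R
    _ ≤ ∫⁻ y, (ball x (2 * max r R)).indicator (fun y ↦ γ y * μ (ball 0 (min r R))) y ∂μ :=
        lintegral_mono hinter
    _ = μ (ball x (2 * max r R)) * (⨍⁻ y in ball x (2 * max r R), γ y ∂μ)
          * μ (ball 0 (min r R)) := by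
        rw [lintegral_indicator measurableSet_ball,
          lintegral_mul_const' _ _ measure_ball_lt_top.ne, measure_mul_setLAverage _
          measure_ball_lt_top.ne]
    _ ≤ μ (ball x (2 * max r R)) * maximalFunction μ γ x * μ (ball 0 (min r R)) := by
        gcongr
        exact laverage_ball_le_maximalFunction μ γ x (by positivity)
    _ = 2 ^ Module.finrank ℝ E * maximalFunction μ γ x *
          (μ (ball 0 (max r R)) * μ (ball 0 (min r R))) := by
        rw [addHaar_ball_two_mul μ x 0]
        ring
    _ = 2 ^ Module.finrank ℝ E * maximalFunction μ γ x * (μ (ball 0 r) * μ (ball 0 R)) := by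
        rcases le_total r R with h | h <;> simp [h, mul_comm]

lemma maximalFunction_laverage_ball_le {γ : E → ℝ≥0∞} (hγ : AEMeasurable γ μ) {R : ℝ}
    (hR : 0 < R) (x : E) :
    maximalFunction μ (fun z ↦ ⨍⁻ y in ball z R, γ y ∂μ) x ≤
      2 ^ Module.finrank ℝ E * maximalFunction μ γ x := by
  refine iSup₂_le fun r hr ↦ ?_
  have hμR : (μ (ball 0 R))⁻¹ ≠ ∞ := ENNReal.inv_ne_top.2 (measure_ball_pos μ 0 hR).ne'
  rw [setLAverage_eq, Measure.addHaar_ball_center μ x]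
  simp only [setLAverage_eq, Measure.addHaar_ball_center μ _ R, div_eq_mul_inv]
  rw [lintegral_mul_const' _ _ hμR, ← div_eq_mul_inv, ← div_eq_mul_inv]
  refine ENNReal.div_le_of_le_mul (ENNReal.div_le_of_le_mul ?_)
  simpa only [mul_assoc] using setLIntegral_ball_setLIntegral_ball_le hγ x hr R

lemma map_lineMap_addHaar (x : E) {t : ℝ} (ht : t ≠ 0) :
    μ.map (AffineMap.lineMap x · t) = ENNReal.ofReal |t⁻¹ ^ Module.finrank ℝ E| • μ := by
  ext s hs
  have hpre : (AffineMap.lineMap x · t) ⁻¹' s = AffineMap.homothety x t⁻¹ '' s := by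
    ext z
    simp only [mem_preimage, mem_image, AffineMap.homothety_eq_lineMap]
    refine ⟨fun h ↦ ⟨_, h, by simp [ht]⟩, ?_⟩
    rintro ⟨w, hw, rfl⟩
    simpa [ht] using hw
  rw [Measure.map_apply (by fun_prop) hs, hpre, Measure.addHaar_image_homothety,
    Measure.smul_apply, smul_eq_mul]

lemma laverage_ball_comp_lineMap (γ : E → ℝ≥0∞) (x : E) {t : ℝ} (ht : 0 < t) (r : ℝ) :
    ⨍⁻ z in ball x r, γ (AffineMap.lineMap x z t) ∂μ = ⨍⁻ z in ball x (t * r), γ z ∂μ := by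
  have hc : ENNReal.ofReal |t⁻¹ ^ Module.finrank ℝ E| ≠ 0 := by simp [ht.ne']
  have hemb : MeasurableEmbedding fun z : E ↦ AffineMap.lineMap x z t :=
    Continuous.measurableEmbedding (by fun_prop) fun z w h ↦ by
      simpa [AffineMap.lineMap_apply, ht.ne'] using h
  have hpre : (AffineMap.lineMap x · t) ⁻¹' ball x (t * r) = ball x r := by
    ext z
    simp [dist_lineMap_left, abs_of_pos ht, ht, dist_comm x z]
  rw [setLAverage_eq, setLAverage_eq, ← hpre, ← hemb.map_apply, ← hemb.lintegral_map,
    ← hemb.restrict_map, map_lineMap_addHaar x ht.ne', Measure.restrict_smul,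
    lintegral_smul_measure, Measure.smul_apply, smul_eq_mul, smul_eq_mul,
    ENNReal.mul_div_mul_left _ _ hc ENNReal.ofReal_ne_top]

lemma eventually_laverage_ball_le {g : E → F} (hg : LocallyIntegrable g μ) :
    ∀ᵐ x ∂μ, ∀ᶠ r in 𝓝[>] (0 : ℝ), ⨍⁻ y in ball x r, ‖g y‖ₑ ∂μ ≤ 1 + ‖g x‖ₑ := by
  filter_upwards [(Besicovitch.vitaliFamily μ).ae_tendsto_lintegral_enorm_sub_div hg] with x hx
  have hsmall := (hx.comp (Besicovitch.tendsto_filterAt μ x)).eventually_lt_const zero_lt_one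
  filter_upwards [hsmall, self_mem_nhdsWithin] with r hr (hr₀ : 0 < r)
  calc ⨍⁻ y in ball x r, ‖g y‖ₑ ∂μ = ⨍⁻ y in closedBall x r, ‖g y‖ₑ ∂μ :=
        setLAverage_congr (ball_ae_eq_closedBall μ x hr₀.ne')
    _ ≤ ⨍⁻ y in closedBall x r, (‖g y - g x‖ₑ + ‖g x‖ₑ) ∂μ :=
        laverage_mono_ae (.of_forall fun y ↦ by simpa using enorm_add_le (g y - g x) (g x))
    _ = ⨍⁻ y in closedBall x r, ‖g y - g x‖ₑ ∂μ + ‖g x‖ₑ := by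
        rw [setLAverage_eq', lintegral_add_right _ measurable_const, ← setLAverage_eq',
          ← setLAverage_eq', setLAverage_const (measure_closedBall_pos μ x hr₀).ne'
          measure_closedBall_lt_top.ne]
    _ ≤ 1 + ‖g x‖ₑ := by
        rw [setLAverage_eq]
        gcongr
        exact hr.le

lemma ae_maximalFunction_lt_top {p : ℝ≥0∞} (hp : 1 ≤ p) {g : E → F} (hg : MemLp g p μ) :
    ∀ᵐ x ∂μ, maximalFunction μ (‖g ·‖ₑ) x < ∞ := by
  filter_upwards [eventually_laverage_ball_le (hg.locallyIntegrable hp)] with x hx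
  obtain ⟨δ, hδ : 0 < δ, hsmall⟩ := mem_nhdsGT_iff_exists_Ioo_subset.1 hx
  have hμδ : (μ (ball x δ))⁻¹ ≠ ∞ := ENNReal.inv_ne_top.2 (measure_ball_pos μ x hδ).ne'
  have hlarge {r : ℝ} (hr : δ ≤ r) : ⨍⁻ y in ball x r, ‖g y‖ₑ ∂μ ≤
      (μ (ball x δ))⁻¹ ^ (1 / p).toReal * eLpNorm g p μ :=
    (laverage_enorm_le_eLpNorm hp hg.1 (measure_ball_pos μ x (hδ.trans_le hr)).ne'
      measure_ball_lt_top.ne).trans (by gcongr)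
  have hsmall_lt : 1 + ‖g x‖ₑ < ∞ := ENNReal.add_lt_top.2 ⟨ENNReal.one_lt_top, enorm_lt_top⟩
  have hlarge_lt : (μ (ball x δ))⁻¹ ^ (1 / p).toReal * eLpNorm g p μ < ∞ :=
    ENNReal.mul_lt_top (ENNReal.rpow_lt_top_of_nonneg ENNReal.toReal_nonneg hμδ) hg.2
  refine (iSup₂_le fun r hr ↦ ?_).trans_lt (max_lt hsmall_lt hlarge_lt)
  rcases lt_or_ge r δ with h | h
  · exact le_max_of_le_left (hsmall ⟨hr, h⟩)
  · exact le_max_of_le_right (hlarge h)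

end Haar

section ContDiff

variable {E F : Type*} [NormedAddCommGroup E] [NormedSpace ℝ E] [NormedAddCommGroup F]
  [NormedSpace ℝ F] {u : E → F}

lemma enorm_sub_le_setLIntegral_enorm_fderiv (hu : ContDiff ℝ 1 u) (x z : E) :
    ‖u z - u x‖ₑ ≤
      ∫⁻ t in Ioc (0 : ℝ) 1, ‖fderiv ℝ u (AffineMap.lineMap x z t)‖ₑ * ‖z - x‖ₑ := by
  have hderiv (t : ℝ) : HasDerivAt (fun t ↦ u (AffineMap.lineMap x z t))
      (fderiv ℝ u (AffineMap.lineMap x z t) (z - x)) t :=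
    (hu.differentiable one_ne_zero _).hasFDerivAt.comp_hasDerivAt t AffineMap.hasDerivAt_lineMap
  have hline : ContDiff ℝ 1 fun t : ℝ ↦ u (AffineMap.lineMap x z t) := by
    simp only [AffineMap.lineMap_apply_module']
    fun_prop
  calc ‖u z - u x‖ₑ
      ≤ ∫⁻ t in Icc (0 : ℝ) 1, ‖deriv (fun t ↦ u (AffineMap.lineMap x z t)) t‖ₑ := by
        simpa using enorm_sub_le_lintegral_deriv_of_contDiffOn_Icc hline.contDiffOn zero_le_one
    _ = ∫⁻ t in Ioc (0 : ℝ) 1, ‖deriv (fun t ↦ u (AffineMap.lineMap x z t)) t‖ₑ :=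
        setLIntegral_congr Ioc_ae_eq_Icc.symm
    _ ≤ ∫⁻ t in Ioc (0 : ℝ) 1, ‖fderiv ℝ u (AffineMap.lineMap x z t)‖ₑ * ‖z - x‖ₑ :=
        lintegral_mono fun t ↦ (hderiv t).deriv ▸ ContinuousLinearMap.le_opENorm _ _

variable [FiniteDimensional ℝ E] [MeasurableSpace E] [BorelSpace E] {μ : Measure E}
  [μ.IsAddHaarMeasure]

lemma laverage_ball_enorm_sub_le (hu : ContDiff ℝ 1 u) (x : E) {r : ℝ} (hr : 0 < r) :
    ⨍⁻ z in ball x r, ‖u z - u x‖ₑ ∂μ ≤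
      ENNReal.ofReal r * maximalFunction μ (‖fderiv ℝ u ·‖ₑ) x := by
  have hmeas : Measurable fun q : E × ℝ ↦
      ‖fderiv ℝ u (AffineMap.lineMap x q.1 q.2)‖ₑ * ENNReal.ofReal r := by
    have hcont : Continuous fun q : E × ℝ ↦ ‖fderiv ℝ u (AffineMap.lineMap x q.1 q.2)‖ₑ := by
      have := hu.continuous_fderiv one_ne_zero
      simp only [AffineMap.lineMap_apply_module']
      fun_prop
    exact hcont.measurable.mul_const _
  have hnorm : ∀ᵐ z ∂μ.restrict (ball x r), ‖z - x‖ₑ ≤ ENNReal.ofReal r := by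
    filter_upwards [ae_restrict_mem measurableSet_ball] with z hz
    rw [← edist_eq_enorm_sub, edist_dist]
    exact ENNReal.ofReal_le_ofReal (mem_ball.1 hz).le
  calc ⨍⁻ z in ball x r, ‖u z - u x‖ₑ ∂μ
      ≤ ⨍⁻ z in ball x r, (∫⁻ t in Ioc (0 : ℝ) 1,
          ‖fderiv ℝ u (AffineMap.lineMap x z t)‖ₑ * ENNReal.ofReal r) ∂μ := by
        refine laverage_mono_ae (hnorm.mono fun z hz ↦ ?_)
        exact (enorm_sub_le_setLIntegral_enorm_fderiv hu x z).trans
          (lintegral_mono fun t ↦ mul_le_mul_right hz _)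
    _ = ∫⁻ t in Ioc (0 : ℝ) 1, ⨍⁻ z in ball x r,
          ‖fderiv ℝ u (AffineMap.lineMap x z t)‖ₑ * ENNReal.ofReal r ∂μ := by
        rw [setLAverage_eq', lintegral_lintegral_swap hmeas.aemeasurable]
        simp only [setLAverage_eq']
    _ ≤ ∫⁻ _ in Ioc (0 : ℝ) 1,
          ENNReal.ofReal r * maximalFunction μ (‖fderiv ℝ u ·‖ₑ) x := by
        refine setLIntegral_mono' measurableSet_Ioc fun t ht ↦ ?_
        rw [setLAverage_eq', lintegral_mul_const' _ _ ENNReal.ofReal_ne_top, ← setLAverage_eq',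
          laverage_ball_comp_lineMap (‖fderiv ℝ u ·‖ₑ) x ht.1, mul_comm]
        gcongr
        exact laverage_ball_le_maximalFunction μ _ x (mul_pos ht.1 hr)
    _ = ENNReal.ofReal r * maximalFunction μ (‖fderiv ℝ u ·‖ₑ) x := by simp

lemma edist_le_edist_mul_maximalFunction_fderiv (hu : ContDiff ℝ 1 u) (x y : E) :
    edist (u x) (u y) ≤ 2 ^ (Module.finrank ℝ E + 1) * edist x y *
      (maximalFunction μ (‖fderiv ℝ u ·‖ₑ) x +
        maximalFunction μ (‖fderiv ℝ u ·‖ₑ) y) := by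
  rcases eq_or_ne x y with rfl | hxy
  · simp
  have hr : 0 < dist x y := dist_pos.2 hxy
  have hsub : ball x (dist x y) ⊆ ball y (2 * dist x y) :=
    ball_subset_ball' (by linarith)
  set M := maximalFunction μ (‖fderiv ℝ u ·‖ₑ)
  calc edist (u x) (u y) = ⨍⁻ _ in ball x (dist x y), edist (u x) (u y) ∂μ :=
        (setLAverage_const (measure_ball_pos μ x hr).ne' measure_ball_lt_top.ne _).symm
    _ ≤ ⨍⁻ z in ball x (dist x y), (‖u z - u x‖ₑ + ‖u z - u y‖ₑ) ∂μ :=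
        laverage_mono_ae (.of_forall fun z ↦ by
          simpa only [edist_eq_enorm_sub] using edist_triangle_left (u x) (u y) (u z))
    _ = ⨍⁻ z in ball x (dist x y), ‖u z - u x‖ₑ ∂μ +
          ⨍⁻ z in ball x (dist x y), ‖u z - u y‖ₑ ∂μ := by
        have hmeas : Measurable fun z ↦ ‖u z - u x‖ₑ :=
          (hu.continuous.sub continuous_const).enorm.measurable
        rw [setLAverage_eq', lintegral_add_left hmeas, ← setLAverage_eq', ← setLAverage_eq']
    _ ≤ ⨍⁻ z in ball x (dist x y), ‖u z - u x‖ₑ ∂μ +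
          2 ^ Module.finrank ℝ E * ⨍⁻ z in ball y (2 * dist x y), ‖u z - u y‖ₑ ∂μ := by
        gcongr
        exact laverage_ball_le_of_subset _ hsub
    _ ≤ ENNReal.ofReal (dist x y) * M x +
          2 ^ Module.finrank ℝ E * (ENNReal.ofReal (2 * dist x y) * M y) := by
        gcongr
        · exact laverage_ball_enorm_sub_le hu x hr
        · exact laverage_ball_enorm_sub_le hu y (by positivity)
    _ = 1 * edist x y * M x + 2 ^ (Module.finrank ℝ E + 1) * edist x y * M y := by
        rw [ENNReal.ofReal_mul two_pos.le, ← edist_dist, ENNReal.ofReal_ofNat]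
        ring
    _ ≤ 2 ^ (Module.finrank ℝ E + 1) * edist x y * (M x + M y) := by
        rw [mul_add]
        gcongr
        exact one_le_pow₀ one_le_two

end ContDiff

section Convolution

variable {E F : Type*} [NormedAddCommGroup E] [NormedSpace ℝ E] [FiniteDimensional ℝ E]
  [MeasurableSpace E] [BorelSpace E] {μ : Measure E} [μ.IsAddHaarMeasure]
  [NormedAddCommGroup F] [NormedSpace ℝ F]

lemma enorm_normed_convolution_le_laverage (φ : ContDiffBump (0 : E)) {K : ℝ}
    (hφ : φ.rOut ≤ K * φ.rIn) (g : E → F) (x : E) :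
    ‖(φ.normed μ ⋆[lsmul ℝ ℝ, μ] g) x‖ₑ ≤
      ENNReal.ofReal (K ^ Module.finrank ℝ E) * ⨍⁻ y in ball x φ.rOut, ‖g y‖ₑ ∂μ := by
  have hball : μ (ball x φ.rOut) = μ (closedBall 0 φ.rOut) := by
    rw [Measure.addHaar_ball_center, measure_congr (ball_ae_eq_closedBall μ 0 φ.rOut_pos.ne')]
  have hpos : 0 < μ.real (closedBall 0 φ.rOut) :=
    ENNReal.toReal_pos (measure_closedBall_pos μ 0 φ.rOut_pos).ne' measure_closedBall_lt_top.ne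
  have hkernel (y : E) : ‖φ.normed μ (x - y)‖ₑ * ‖g y‖ₑ ≤ (ball x φ.rOut).indicator
      (fun y ↦ ENNReal.ofReal (K ^ Module.finrank ℝ E) / μ (ball x φ.rOut) * ‖g y‖ₑ) y := by
    by_cases hy : y ∈ ball x φ.rOut
    · rw [indicator_of_mem hy, Real.enorm_of_nonneg (φ.nonneg_normed _), hball,
        ← ofReal_measureReal measure_closedBall_lt_top.ne,
        ← ENNReal.ofReal_div_of_pos hpos]
      gcongr
      exact φ.normed_le_div_measure_closedBall_rOut μ K hφ (x - y)
    · have hsupp : x - y ∉ Function.support (φ.normed μ) := by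
        rwa [φ.support_normed_eq, mem_ball_zero_iff, ← dist_eq_norm, ← mem_ball']
      simp [Function.notMem_support.1 hsupp]
  calc ‖(φ.normed μ ⋆[lsmul ℝ ℝ, μ] g) x‖ₑ
      ≤ ∫⁻ y, ‖φ.normed μ (x - y)‖ₑ * ‖g y‖ₑ ∂μ := by
        rw [convolution_lsmul_swap]
        simpa only [enorm_smul] using
          enorm_integral_le_lintegral_enorm fun y ↦ φ.normed μ (x - y) • g y
    _ ≤ ∫⁻ y in ball x φ.rOut,
          ENNReal.ofReal (K ^ Module.finrank ℝ E) / μ (ball x φ.rOut) * ‖g y‖ₑ ∂μ :=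
        (lintegral_mono hkernel).trans_eq (lintegral_indicator measurableSet_ball _)
    _ = ENNReal.ofReal (K ^ Module.finrank ℝ E) * ⨍⁻ y in ball x φ.rOut, ‖g y‖ₑ ∂μ := by
        rw [lintegral_const_mul' _ _ (ENNReal.div_ne_top ENNReal.ofReal_ne_top
          (measure_ball_pos μ x φ.rOut_pos).ne'), setLAverage_eq, div_eq_mul_inv, div_eq_mul_inv,
          mul_assoc, mul_comm (μ _)⁻¹]

end Convolution

section PreciseRepresentative

variable {n : ℕ} {F : Type*} [NormedAddCommGroup F] [NormedSpace ℝ F] {f : Euc n → F}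

lemma preciseRepV_eq_of_tendsto {x : Euc n} {L : F}
    (h : Tendsto (fun ε ↦ ⨍ y in ball x ε, f y) (𝓝[>] (0 : ℝ)) (𝓝 L)) : preciseRepV f x = L := by
  have hex : ∃ L, Tendsto (fun ε ↦ ⨍ y in ball x ε, f y) (𝓝[>] (0 : ℝ)) (𝓝 L) := ⟨L, h⟩
  rw [preciseRepV, dif_pos hex]
  exact tendsto_nhds_unique hex.choose_spec h

lemma preciseRepV_ae_eq [CompleteSpace F] (hf : LocallyIntegrable f) :
    preciseRepV f =ᵐ[volume] f := by
  filter_upwards [(Besicovitch.vitaliFamily volume).ae_tendsto_average hf] with x hx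
  refine preciseRepV_eq_of_tendsto
    ((hx.comp (Besicovitch.tendsto_filterAt volume x)).congr' ?_)
  filter_upwards [self_mem_nhdsWithin] with ε (hε : 0 < ε)
  exact setAverage_congr (ball_ae_eq_closedBall volume x hε.ne').symm

end PreciseRepresentative

section WeakGradient

variable {n : ℕ}

lemma mdeg_single (i : Fin n) : mdeg (Pi.single i 1) = 1 := by
  simp [mdeg]

lemma mderiv_single (i : Fin n) (η : Euc n → ℝ) :
    mderiv (Pi.single i 1) η = fun x ↦ fderiv ℝ η x (EuclideanSpace.single i 1) := by
  have hlist : (List.finRange n).flatMap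
      (fun j ↦ List.replicate ((Pi.single i 1 : Fin n → ℕ) j) j) = List.replicate 1 i := by
    refine List.eq_replicate_iff.2 ⟨?_, fun j hj ↦ ?_⟩
    · simp [List.length_flatMap, ← Fin.sum_univ_def]
    · by_contra hne
      simp_all [Pi.single_apply]
  rw [mderiv, hlist]
  rfl

variable {f : Euc n → ℝ} {g : Euc n → Euc n}

lemma IsWeakGradient.integral_mul_fderiv (hfg : IsWeakGradient f g) (hf : LocallyIntegrable f)
    (hg : LocallyIntegrable g) {η : Euc n → ℝ} (hη : ContDiff ℝ (⊤ : ℕ∞) η)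
    (hη' : HasCompactSupport η) (v : Euc n) :
    ∫ x, f x * fderiv ℝ η x v = -∫ x, inner ℝ (g x) v * η x := by
  have hpartial (i : Fin n) : ∫ x, f x * fderiv ℝ η x (EuclideanSpace.single i 1) =
      -∫ x, inner ℝ (g x) (EuclideanSpace.single i 1) * η x := by
    simpa [mderiv_single, mdeg_single] using hfg i η hη hη'
  have hintf (w : Euc n) : Integrable fun x ↦ f x * fderiv ℝ η x w := by
    have := hf.integrable_smul_left_of_hasCompactSupport
      ((hη.continuous_fderiv_apply (by simp)).comp (Continuous.prodMk_left w))
      (hη'.fderiv_apply ℝ w)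
    simpa [mul_comm] using this
  have hintg (w : Euc n) : Integrable fun x ↦ inner ℝ (g x) w * η x := by
    have := (hg.integrable_smul_left_of_hasCompactSupport hη.continuous hη').inner_const (𝕜 := ℝ) w
    simpa [inner_smul_left, mul_comm] using this
  have hspan : v ∈ Submodule.span ℝ (range (EuclideanSpace.basisFun (Fin n) ℝ).toBasis) := by
    rw [Module.Basis.span_eq]
    trivial
  induction hspan using Submodule.span_induction with
  | mem w hw =>
    obtain ⟨i, rfl⟩ := hw
    simpa using hpartial i
  | zero => simp
  | add w w' _ _ hw hw' =>
    simp only [map_add, inner_add_right, mul_add, add_mul]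
    rw [integral_add (hintf w) (hintf w'), integral_add (hintg w) (hintg w'), hw, hw', neg_add]
  | smul c w _ hw =>
    simp only [map_smul, real_inner_smul_right, smul_eq_mul, mul_left_comm _ c, mul_assoc c,
      integral_const_mul, hw, mul_neg]

lemma IsWeakGradient.hasGradientAt_convolution (hfg : IsWeakGradient f g)
    (hf : LocallyIntegrable f) (hg : LocallyIntegrable g) {φ : Euc n → ℝ}
    (hφ : ContDiff ℝ (⊤ : ℕ∞) φ) (hφ' : HasCompactSupport φ) (x : Euc n) :
    HasGradientAt (φ ⋆[lsmul ℝ ℝ, volume] f) ((φ ⋆[lsmul ℝ ℝ, volume] g) x) x := by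
  have hφ₁ : ContDiff ℝ 1 φ := hφ.of_le (by simp)
  have hfderiv : HasFDerivAt (φ ⋆[lsmul ℝ ℝ, volume] f)
      ((f ⋆[(lsmul ℝ ℝ).flip.precompR (Euc n), volume] fderiv ℝ φ) x) x := by
    simpa only [convolution_flip] using
      hφ'.hasFDerivAt_convolution_right (lsmul ℝ ℝ : ℝ →L[ℝ] ℝ →L[ℝ] ℝ).flip hf hφ₁ x
  have hη' : HasCompactSupport fun y ↦ φ (x - y) := hφ'.comp_homeomorph (Homeomorph.subLeft x)
  have hη (y v : Euc n) : fderiv ℝ (fun y ↦ φ (x - y)) y v = -fderiv ℝ φ (x - y) v := by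
    have h := (hφ₁.differentiable one_ne_zero (x - y)).hasFDerivAt.comp y
      ((hasFDerivAt_id (𝕜 := ℝ) y).const_sub x)
    simpa [Function.comp_def] using DFunLike.congr_fun h.fderiv v
  have hint : Integrable fun y ↦ φ (x - y) • g y :=
    hg.integrable_smul_left_of_hasCompactSupport (by fun_prop) hη'
  rw [hasGradientAt_iff_hasFDerivAt]
  refine hfderiv.congr_fderiv (ContinuousLinearMap.ext fun v ↦ Eq.symm ?_)
  rw [convolution_precompR_apply _ hf (hφ'.fderiv ℝ) (hφ₁.continuous_fderiv one_ne_zero)]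
  calc InnerProductSpace.toDual ℝ (Euc n) ((φ ⋆[lsmul ℝ ℝ, volume] g) x) v
      = ∫ y, inner ℝ (φ (x - y) • g y) v := by
        rw [InnerProductSpace.toDual_apply_apply, real_inner_comm, convolution_lsmul_swap,
          ← integral_inner hint]
        simp only [real_inner_comm]
    _ = -∫ y, f y * fderiv ℝ (fun y ↦ φ (x - y)) y v := by
        rw [hfg.integral_mul_fderiv hf hg (by fun_prop) hη', neg_neg]
        simp only [real_inner_smul_left, mul_comm]
    _ = (f ⋆[(lsmul ℝ ℝ).flip, volume] fun a ↦ fderiv ℝ φ a v) x := by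
        simp [hη, convolution_def, integral_neg, mul_comm]

lemma IsWeakGradient.maximalFunction_fderiv_convolution_le (hfg : IsWeakGradient f g)
    (hf : LocallyIntegrable f) (hg : LocallyIntegrable g) (φ : ContDiffBump (0 : Euc n)) {K : ℝ}
    (hφ : φ.rOut ≤ K * φ.rIn) (x : Euc n) :
    maximalFunction volume (‖fderiv ℝ (φ.normed volume ⋆[lsmul ℝ ℝ, volume] f) ·‖ₑ) x ≤
      ENNReal.ofReal (K ^ n) * (2 ^ n * maximalFunction volume (‖g ·‖ₑ) x) := by
  have hfderiv (z : Euc n) : ‖fderiv ℝ (φ.normed volume ⋆[lsmul ℝ ℝ, volume] f) z‖ₑ ≤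
      ENNReal.ofReal (K ^ n) * ⨍⁻ y in ball z φ.rOut, ‖g y‖ₑ ∂volume := by
    have hgrad := hfg.hasGradientAt_convolution hf hg (φ := φ.normed volume) φ.contDiff_normed
      φ.hasCompactSupport_normed z
    rw [hgrad.hasFDerivAt.fderiv, LinearIsometryEquiv.enorm_map]
    simpa using enorm_normed_convolution_le_laverage φ hφ g z
  calc maximalFunction volume
        (‖fderiv ℝ (φ.normed volume ⋆[lsmul ℝ ℝ, volume] f) ·‖ₑ) x
      ≤ maximalFunction volume
          (fun z ↦ ENNReal.ofReal (K ^ n) * ⨍⁻ y in ball z φ.rOut, ‖g y‖ₑ ∂volume) x :=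
        maximalFunction_mono hfderiv x
    _ = ENNReal.ofReal (K ^ n) *
          maximalFunction volume (fun z ↦ ⨍⁻ y in ball z φ.rOut, ‖g y‖ₑ ∂volume) x :=
        maximalFunction_const_mul ENNReal.ofReal_ne_top _ x
    _ ≤ ENNReal.ofReal (K ^ n) * (2 ^ n * maximalFunction volume (‖g ·‖ₑ) x) := by
        gcongr
        simpa using maximalFunction_laverage_ball_le hg.aestronglyMeasurable.enorm φ.rOut_pos x

lemma IsWeakGradient.edist_normed_convolution_le (hfg : IsWeakGradient f g)
    (hf : LocallyIntegrable f) (hg : LocallyIntegrable g) (φ : ContDiffBump (0 : Euc n))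
    (hφ : φ.rOut ≤ 2 * φ.rIn) (x y : Euc n) :
    edist ((φ.normed volume ⋆[lsmul ℝ ℝ, volume] f) x)
        ((φ.normed volume ⋆[lsmul ℝ ℝ, volume] f) y) ≤
      2 ^ (3 * n + 1) * edist x y *
        (maximalFunction volume (‖g ·‖ₑ) x + maximalFunction volume (‖g ·‖ₑ) y) := by
  have hsmooth : ContDiff ℝ 1 (φ.normed volume ⋆[lsmul ℝ ℝ, volume] f) :=
    φ.hasCompactSupport_normed.contDiff_convolution_left (n := 1) _ φ.contDiff_normed hf
  have hmax := hfg.maximalFunction_fderiv_convolution_le hf hg φ hφ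
  rw [ENNReal.ofReal_pow two_pos.le, ENNReal.ofReal_ofNat] at hmax
  refine (edist_le_edist_mul_maximalFunction_fderiv (μ := volume) hsmooth x y).trans
    ((mul_le_mul_right (add_le_add (hmax x) (hmax y)) _).trans_eq ?_)
  -- `2 ^ (n + 1)` from the `C¹` inequality, `2 ^ n` from the kernel, `2 ^ n` from averaging.
  rw [finrank_euclideanSpace_fin]
  ring

lemma IsWeakGradient.exists_mem_ae_edist_preciseRep_le (hfg : IsWeakGradient f g)
    (hf : LocallyIntegrable f) (hg : LocallyIntegrable g) :
    ∃ s ∈ ae (volume : Measure (Euc n)), ∀ x ∈ s, ∀ y ∈ s,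
      edist (preciseRep f x) (preciseRep f y) ≤ 2 ^ (3 * n + 1) * edist x y *
        (maxFn (‖g ·‖ₑ) x + maxFn (‖g ·‖ₑ) y) := by
  let φ (m : ℕ) : ContDiffBump (0 : Euc n) :=
    { rIn := 1 / (m + 1)
      rOut := 2 * (1 / (m + 1))
      rIn_pos := by positivity
      rIn_lt_rOut := lt_two_mul_self (by positivity) }
  have hφ : Tendsto (fun m ↦ (φ m).rOut) atTop (𝓝 0) := by
    simpa [φ] using (tendsto_one_div_add_atTop_nhds_zero_nat (𝕜 := ℝ)).const_mul 2
  have hlim : ∀ᵐ x, Tendsto (fun m ↦ ((φ m).normed volume ⋆[lsmul ℝ ℝ, volume] f) x) atTop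
      (𝓝 (preciseRep f x)) := by
    filter_upwards [preciseRepV_ae_eq hf,
      ContDiffBump.ae_convolution_tendsto_right_of_locallyIntegrable (K := 2) hφ
        (.of_forall fun _ ↦ le_rfl) hf] with x hrep hx
    rwa [preciseRep, hrep]
  rw [maxFn_eq_maximalFunction]
  exact ⟨_, hlim, fun x hx y hy ↦ le_of_tendsto (Tendsto.edist hx hy) (.of_forall fun m ↦
    hfg.edist_normed_convolution_le hf hg (φ m) le_rfl x y)⟩

theorem lipschitz_approximation_lebesgue_general {p : ℝ≥0∞} (hp : 1 ≤ p)
    (hf : LocallyIntegrable f) (hfg : IsWeakGradient f g) (hg : MemLp g p volume) :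
    ∃ A : ℕ → Set (Euc n),
      (∀ j, IsClosed (A j)) ∧ (∀ j, A j ⊆ A (j + 1)) ∧
      (∀ j, ∃ N : Set (Euc n), volume N = 0 ∧
        ∃ K : ℝ≥0, LipschitzOnWith K (preciseRep f) (A j \ N)) ∧
      volume ((Set.univ : Set (Euc n)) \ ⋃ j, A j) = 0 := by
  obtain ⟨s, hs, hlip⟩ := hfg.exists_mem_ae_edist_preciseRep_le hf (hg.locallyIntegrable hp)
  have hlsc : LowerSemicontinuous (maxFn (‖g ·‖ₑ)) :=
    maxFn_eq_maximalFunction (‖g ·‖ₑ) ▸ lowerSemicontinuous_maximalFunction volume _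
  have hfin : ∀ᵐ x, maxFn (‖g ·‖ₑ) x < ∞ :=
    maxFn_eq_maximalFunction (‖g ·‖ₑ) ▸ ae_maximalFunction_lt_top hp hg
  refine ⟨fun j ↦ maxFn (‖g ·‖ₑ) ⁻¹' Iic (j : ℝ≥0∞), fun j ↦ hlsc.isClosed_preimage _,
    fun j ↦ preimage_mono (Iic_subset_Iic.2 (Nat.cast_le.2 j.le_succ)),
    fun j ↦ ⟨sᶜ, hs, 2 ^ (3 * n + 1) * (j + j), ?_⟩, ?_⟩
  · rintro x ⟨hxj, hxs⟩ y ⟨hyj, hys⟩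
    calc edist (preciseRep f x) (preciseRep f y)
        ≤ 2 ^ (3 * n + 1) * edist x y * (maxFn (‖g ·‖ₑ) x + maxFn (‖g ·‖ₑ) y) :=
          hlip x (not_not.1 hxs) y (not_not.1 hys)
      _ ≤ 2 ^ (3 * n + 1) * edist x y * (j + j) := by gcongr <;> assumption
      _ = ((2 ^ (3 * n + 1) * (j + j) : ℝ≥0) : ℝ≥0∞) * edist x y := by push_cast; ring
  · rw [← compl_eq_univ_sdiff, ← mem_ae_iff]
    filter_upwards [hfin] with x hx
    exact mem_iUnion.2 ((ENNReal.exists_nat_gt hx.ne).imp fun _ ↦ le_of_lt)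

end WeakGradient

/-- Remark 4.7: Lipschitz approximation of a `W^{k,p}` function outside
sets of Lebesgue measure zero. -/
theorem lipschitz_approximation_lebesgue {n k : ℕ} {p : ℝ} (hp : 1 ≤ p)
    (f : Euc n → ℝ) (g : Euc n → Euc n)
    (hf : MemLp f (ENNReal.ofReal p) volume)
    (hDf : ∀ α : Fin n → ℕ, mdeg α ≤ k → ∃ h : Euc n → ℝ,
      MemLp h (ENNReal.ofReal p) volume ∧ IsWeakDeriv α f h)
    (hg : IsWeakGradient f g) (hgp : MemLp g (ENNReal.ofReal p) volume) :
    ∃ A : ℕ → Set (Euc n),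
      (∀ j, IsClosed (A j)) ∧ (∀ j, A j ⊆ A (j + 1)) ∧
      (∀ j, ∃ N : Set (Euc n), volume N = 0 ∧
        ∃ K : ℝ≥0, LipschitzOnWith K (preciseRep f) (A j \ N)) ∧
      volume ((Set.univ : Set (Euc n)) \ ⋃ j, A j) = 0 := by
  have hp' : 1 ≤ ENNReal.ofReal p := ENNReal.one_le_ofReal.2 hp
  exact lipschitz_approximation_lebesgue_general hp' (hf.locallyIntegrable hp') hg hgp
end
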